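/- Global quantitative strong maximum principle in the unit ball. For every integer n ≥ 2, reals 0 < λ ≤ Λ, exponent q > n, and K > 0, there exist constants ε > 0 and c > 0 such that the following holds. Let b : B₁ → ℝ be continuous with b ≥ 0 and ‖b‖_{L^q(B₁)} ≤ K, and let u be a C² function on B₁ with u ≥ 0 such that g(x) := 𝓜⁻(D²u(x)) − b(x)|Du(x)| ≤ 0 for all x ∈ B₁. Then c·(∫_{B₁} (−g(x))^ε dx)^{1/ε} ≤ inf_{x ∈ B₁} u(x)/(1−|x|), the integral being a Lebesgue integral with values in [0,+∞]. -/

import Mathlib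

open MeasureTheory
open scoped ENNReal

/-- The Pucci minimal extremal operator `𝓜⁻(M)` with ellipticity constants `lam ≤ Lam`:
the infimum of `tr(A*M)` over symmetric matrices `A` with `lam•I ≤ A ≤ Lam•I`. -/
noncomputable def pucciMinus (n : ℕ) (lam Lam : ℝ) (M : Matrix (Fin n) (Fin n) ℝ) : ℝ :=
  sInf { t : ℝ | ∃ A : Matrix (Fin n) (Fin n) ℝ, A.IsSymm ∧
    (A - lam • (1 : Matrix (Fin n) (Fin n) ℝ)).PosSemidef ∧
    (Lam • (1 : Matrix (Fin n) (Fin n) ℝ) - A).PosSemidef ∧ t = (A * M).trace }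

/-- The Pucci maximal extremal operator `𝓜⁺(M)`. -/
noncomputable def pucciPlus (n : ℕ) (lam Lam : ℝ) (M : Matrix (Fin n) (Fin n) ℝ) : ℝ :=
  sSup { t : ℝ | ∃ A : Matrix (Fin n) (Fin n) ℝ, A.IsSymm ∧
    (A - lam • (1 : Matrix (Fin n) (Fin n) ℝ)).PosSemidef ∧
    (Lam • (1 : Matrix (Fin n) (Fin n) ℝ) - A).PosSemidef ∧ t = (A * M).trace }

/-- The Hessian matrix `D²u(x)` of `u` at `x`. -/
noncomputable def hess (n : ℕ) (u : EuclideanSpace ℝ (Fin n) → ℝ)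
    (x : EuclideanSpace ℝ (Fin n)) : Matrix (Fin n) (Fin n) ℝ :=
  fun i j => fderiv ℝ (fun y => fderiv ℝ u y (EuclideanSpace.single j (1 : ℝ))) x
    (EuclideanSpace.single i (1 : ℝ))

/-- The euclidean norm `|Du(x)|` of the gradient of `u` at `x`. -/
noncomputable def gradNorm (n : ℕ) (u : EuclideanSpace ℝ (Fin n) → ℝ)
    (x : EuclideanSpace ℝ (Fin n)) : ℝ := ‖fderiv ℝ u x‖

/-- The `L^p` norm `(∫_E |g|^p)^(1/p)`, as a Lebesgue integral valued in `[0,∞]`. -/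
noncomputable def LpNormE (n : ℕ) (p : ℝ) (g : EuclideanSpace ℝ (Fin n) → ℝ)
    (E : Set (EuclideanSpace ℝ (Fin n))) : ℝ≥0∞ :=
  (∫⁻ x in E, ENNReal.ofReal (|g x| ^ p)) ^ (1 / p)

/-- The last (`n`-th) coordinate `x_n` of a point of `ℝⁿ`. -/
def lastC (n : ℕ) (hn : 1 ≤ n) (x : EuclideanSpace ℝ (Fin n)) : ℝ := x ⟨n - 1, by omega⟩

/-- The open half-ball `B_R⁺ = {|x| < R, x_n > 0}`. -/
def halfBall (n : ℕ) (hn : 1 ≤ n) (R : ℝ) : Set (EuclideanSpace ℝ (Fin n)) :=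
  {x | ‖x‖ < R ∧ 0 < lastC n hn x}

/-- The flat boundary part `B_R⁰ = {|x| ≤ R, x_n = 0}`. -/
def flatB (n : ℕ) (hn : 1 ≤ n) (R : ℝ) : Set (EuclideanSpace ℝ (Fin n)) :=
  {x | ‖x‖ ≤ R ∧ lastC n hn x = 0}

/-- The norm `‖g‖_{L^{p,q}(B_R⁺)} = ‖g‖_{L^p(B_R⁺)} + ‖g‖_{L^q(B_R⁺ ∩ {x_n < d0})}`. -/
noncomputable def LpqNormHB (n : ℕ) (hn : 1 ≤ n) (p q d0 R : ℝ)
    (g : EuclideanSpace ℝ (Fin n) → ℝ) : ℝ≥0∞ :=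
  LpNormE n p g (halfBall n hn R) +
    LpNormE n q g {x ∈ halfBall n hn R | lastC n hn x < d0}

/-- The open cube `Q_ρ` of side `ρ` centered at `(0,…,0,ρ/2)`. -/
def cubeQ (n : ℕ) (hn : 1 ≤ n) (ρ : ℝ) : Set (EuclideanSpace ℝ (Fin n)) :=
  {x | (∀ i : Fin n, i.1 ≠ n - 1 → |x i| < ρ / 2) ∧ 0 < lastC n hn x ∧ lastC n hn x < ρ}

/-- The norm `‖g‖_{L^{p,q}(Q₂)} = ‖g‖_{L^p(Q₂)} + ‖g‖_{L^q(Q₂ ∩ {x_n < d0})}`. -/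
noncomputable def LpqNormQ (n : ℕ) (hn : 1 ≤ n) (p q d0 : ℝ)
    (g : EuclideanSpace ℝ (Fin n) → ℝ) : ℝ≥0∞ :=
  LpNormE n p g (cubeQ n hn 2) +
    LpNormE n q g {x ∈ cubeQ n hn 2 | lastC n hn x < d0}


/-- Admissible coefficient matrices. -/
def Adm (n : ℕ) (lam Lam : ℝ) (A : Matrix (Fin n) (Fin n) ℝ) : Prop :=
  A.IsSymm ∧ (A - lam • (1 : Matrix (Fin n) (Fin n) ℝ)).PosSemidef ∧
    (Lam • (1 : Matrix (Fin n) (Fin n) ℝ) - A).PosSemidef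

open scoped ComplexOrder MatrixOrder in
theorem psd_trace_mul_nonneg {n : ℕ} {A B : Matrix (Fin n) (Fin n) ℝ}
    (hA : A.PosSemidef) (hB : B.PosSemidef) : 0 ≤ (A * B).trace := by
  obtain ⟨C, rfl⟩ := CStarAlgebra.nonneg_iff_eq_star_mul_self.mp hB.nonneg
  rw [Matrix.star_eq_conjTranspose, ← Matrix.mul_assoc, Matrix.trace_mul_comm, ← Matrix.mul_assoc]
  exact (hA.mul_mul_conjTranspose_same C).trace_nonneg

theorem Adm.lower {n : ℕ} {lam Lam : ℝ} {A H : Matrix (Fin n) (Fin n) ℝ}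
    (hA : Adm n lam Lam A) (hH : H.PosSemidef) : lam * H.trace ≤ (A * H).trace := by
  have := psd_trace_mul_nonneg hA.2.1 hH
  rw [Matrix.sub_mul, Matrix.trace_sub, Matrix.smul_mul, Matrix.one_mul, Matrix.trace_smul,
    smul_eq_mul] at this
  linarith

theorem Adm.upper {n : ℕ} {lam Lam : ℝ} {A H : Matrix (Fin n) (Fin n) ℝ}
    (hA : Adm n lam Lam A) (hH : H.PosSemidef) : (A * H).trace ≤ Lam * H.trace := by
  have := psd_trace_mul_nonneg hA.2.2 hH
  rw [Matrix.sub_mul, Matrix.trace_sub, Matrix.smul_mul, Matrix.one_mul, Matrix.trace_smul,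
    smul_eq_mul] at this
  linarith

theorem Adm.trace_le {n : ℕ} {lam Lam : ℝ} {A : Matrix (Fin n) (Fin n) ℝ}
    (hA : Adm n lam Lam A) : A.trace ≤ Lam * n := by
  have := hA.upper (Matrix.PosSemidef.one (n := Fin n) (R := ℝ))
  simpa using this

theorem Adm.trace_nonneg {n : ℕ} {lam Lam : ℝ} (hlam : 0 < lam) {A : Matrix (Fin n) (Fin n) ℝ}
    (hA : Adm n lam Lam A) : 0 ≤ A.trace := by
  have := hA.lower (Matrix.PosSemidef.one (n := Fin n) (R := ℝ))
  simp at this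
  exact le_trans (by positivity) this

theorem psd_det_le {n : ℕ} {H : Matrix (Fin n) (Fin n) ℝ} (hH : H.PosSemidef) :
    0 ≤ H.det ∧ H.det ≤ H.trace ^ n := by
  refine ⟨hH.det_nonneg, ?_⟩
  rw [hH.1.det_eq_prod_eigenvalues, hH.1.trace_eq_sum_eigenvalues]
  simp only [RCLike.ofReal_real_eq_id, id]
  calc ∏ i, hH.1.eigenvalues i ≤ ∏ _i : Fin n, ∑ j, hH.1.eigenvalues j := by
        apply Finset.prod_le_prod
        · intro i _; exact hH.eigenvalues_nonneg i
        · intro i _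
          exact Finset.single_le_sum (fun j _ => hH.eigenvalues_nonneg j) (Finset.mem_univ i)
    _ = _ := by simp

theorem adm_lam {n : ℕ} {lam Lam : ℝ} (h : lam ≤ Lam) :
    Adm n lam Lam (lam • (1 : Matrix (Fin n) (Fin n) ℝ)) := by
  refine ⟨?_, ?_, ?_⟩
  · simp [Matrix.IsSymm]
  · simpa using Matrix.PosSemidef.zero
  · rw [← sub_smul]
    exact Matrix.PosSemidef.one.smul (sub_nonneg.2 h)

theorem pucci_exists {n : ℕ} {lam Lam f η : ℝ} (h : lam ≤ Lam)
    {H : Matrix (Fin n) (Fin n) ℝ} (hp : pucciMinus n lam Lam H ≤ f) (hη : 0 < η) :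
    ∃ A, Adm n lam Lam A ∧ (A * H).trace < f + η := by
  have : pucciMinus n lam Lam H < f + η := by linarith
  unfold pucciMinus at this
  obtain ⟨t, ⟨A, h1, h2, h3, rfl⟩, ht⟩ := exists_lt_of_csInf_lt
    (by exact ⟨_, lam • (1 : Matrix (Fin n) (Fin n) ℝ), (adm_lam h).1, (adm_lam h).2.1,
      (adm_lam h).2.2, rfl⟩) this
  exact ⟨A, ⟨h1, h2, h3⟩, ht⟩

theorem pucci_ge {n : ℕ} {lam Lam t : ℝ} (hlam : 0 < lam) (h : lam ≤ Lam) (ht : 0 ≤ t)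
    {H : Matrix (Fin n) (Fin n) ℝ} (hH : (H + t • (1 : Matrix (Fin n) (Fin n) ℝ)).PosSemidef) :
    -(Lam * n * t) ≤ pucciMinus n lam Lam H := by
  apply le_csInf
  · exact ⟨_, lam • (1 : Matrix (Fin n) (Fin n) ℝ), (adm_lam h).1, (adm_lam h).2.1,
      (adm_lam h).2.2, rfl⟩
  · rintro _ ⟨A, h1, h2, h3, rfl⟩
    have hA : Adm n lam Lam A := ⟨h1, h2, h3⟩
    have e1 := hA.lower hH
    have e2 := hA.trace_le
    have e3 := hH.trace_nonneg
    have e4 : (A * (H + t • (1 : Matrix (Fin n) (Fin n) ℝ))).trace = (A * H).trace + t * A.trace := by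
      rw [Matrix.mul_add, Matrix.trace_add, Matrix.mul_smul, Matrix.mul_one, Matrix.trace_smul,
        smul_eq_mul]
    have : 0 ≤ lam * (H + t • (1 : Matrix (Fin n) (Fin n) ℝ)).trace := by positivity
    nlinarith

/-- If `H ≥ 0` splits a supersolution Hessian, its trace is controlled. -/
theorem pucci_trace {n : ℕ} {lam Lam f c : ℝ} (h : lam ≤ Lam)
    {H P : Matrix (Fin n) (Fin n) ℝ} (hp : pucciMinus n lam Lam H ≤ f)
    (hP : (H - P).PosSemidef) (hc : ∀ A, Adm n lam Lam A → c ≤ (A * P).trace) :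
    lam * (H - P).trace ≤ f - c := by
  apply le_of_forall_pos_le_add
  intro η hη
  obtain ⟨A, hA, hAt⟩ := pucci_exists h hp hη
  have e1 := hA.lower hP
  have e2 := hc A hA
  have e4 : (A * (H - P)).trace = (A * H).trace - (A * P).trace := by
    rw [Matrix.mul_sub, Matrix.trace_sub]
  linarith

theorem psd_vecMulVec {n : ℕ} (a : Fin n → ℝ) : (Matrix.vecMulVec a a).PosSemidef := by
  simpa using Matrix.posSemidef_vecMulVec_self_star a


abbrev Eu (n : ℕ) := EuclideanSpace ℝ (Fin n)

/-- gradient as a coordinate vector -/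
noncomputable def gvec (n : ℕ) (u : Eu n → ℝ) (x : Eu n) : Fin n → ℝ :=
  fun i => fderiv ℝ u x (EuclideanSpace.single i (1 : ℝ))

theorem fderiv_diff {n : ℕ} {u : Eu n → ℝ} {x : Eu n} (hu : ContDiffAt ℝ 2 u x) :
    DifferentiableAt ℝ (fderiv ℝ u) x :=
  (hu.fderiv_right (m := 1) (by norm_num)).differentiableAt (by norm_num)

theorem hess_apply {n : ℕ} {u : Eu n → ℝ} {x : Eu n} (hu : ContDiffAt ℝ 2 u x) (i j : Fin n) :
    hess n u x i j = fderiv ℝ (fderiv ℝ u) x (EuclideanSpace.single i (1 : ℝ))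
      (EuclideanSpace.single j (1 : ℝ)) := by
  unfold hess
  rw [fderiv_clm_apply (fderiv_diff hu) (by fun_prop)]
  simp

theorem hess_symm {n : ℕ} {u : Eu n → ℝ} {x : Eu n} (hu : ContDiffAt ℝ 2 u x) :
    (hess n u x).IsHermitian := by
  ext i j
  simp only [Matrix.conjTranspose_apply, star_trivial]
  rw [hess_apply hu, hess_apply hu]
  exact hu.isSymmSndFDerivAt (by simp) _ _

theorem eu_sum {n : ℕ} (ξ : Eu n) : ξ = ∑ i, ξ i • EuclideanSpace.single i (1 : ℝ) := by
  ext j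
  simp [Pi.single_apply]

theorem hess_quad {n : ℕ} {u : Eu n → ℝ} {x : Eu n} (hu : ContDiffAt ℝ 2 u x) (ξ : Eu n) :
    (ξ : Fin n → ℝ) ⬝ᵥ (hess n u x).mulVec ξ = fderiv ℝ (fderiv ℝ u) x ξ ξ := by
  conv_rhs => rw [eu_sum ξ]
  simp only [map_sum, map_smul, sum_apply, smul_apply,
    dotProduct, Matrix.mulVec, smul_eq_mul, hess_apply hu]
  refine Finset.sum_congr rfl fun i _ => ?_
  congr 1
  refine Finset.sum_congr rfl fun j _ => ?_
  rw [hu.isSymmSndFDerivAt (by simp) (EuclideanSpace.single i (1 : ℝ)), mul_comm]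

theorem hess_psd {n : ℕ} {w : Eu n → ℝ} {x : Eu n} (hw : ContDiffAt ℝ 2 w x)
    (h : ∀ᶠ z in nhds x, w x + fderiv ℝ w x (z - x) ≤ w z) : (hess n w x).PosSemidef := by
  refine Matrix.PosSemidef.of_dotProduct_mulVec_nonneg (hess_symm hw) fun ξ₀ => ?_
  set ξ : Eu n := WithLp.toLp 2 ξ₀ with hξ
  have hq := hess_quad hw ξ
  have : star ξ₀ ⬝ᵥ (hess n w x).mulVec ξ₀ = fderiv ℝ (fderiv ℝ w) x ξ ξ := by
    rw [← hq]; simp [hξ]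
  rw [this]
  by_contra hneg
  push Not at hneg
  set γ : ℝ → Eu n := fun t => x + t • ξ with hγ
  have hγd : ∀ t, HasDerivAt γ ξ t := by
    intro t
    have := ((hasDerivAt_id t).smul_const ξ).const_add x
    simpa [hγ] using this
  have hγ0 : γ 0 = x := by simp [hγ]
  have hγt : Filter.Tendsto γ (nhds 0) (nhds x) := by
    have := (hγd 0).continuousAt.tendsto
    rwa [hγ0] at this
  set f : ℝ → ℝ := fun t => w (γ t) - t * fderiv ℝ w x ξ with hf
  have hev : ∀ᶠ z in nhds x, DifferentiableAt ℝ w z := by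
    have := hw.eventually (by simp)
    filter_upwards [this] with z hz
    exact hz.differentiableAt (by norm_num)
  have hfd : ∀ᶠ t in nhds (0:ℝ), HasDerivAt f (fderiv ℝ w (γ t) ξ - fderiv ℝ w x ξ) t := by
    filter_upwards [hγt.eventually hev] with t ht
    have h1 := ht.hasFDerivAt.comp_hasDerivAt t (hγd t)
    have h2 := (hasDerivAt_id t).mul_const (fderiv ℝ w x ξ)
    have h3 := h1.fun_sub h2
    simp only [one_mul] at h3
    exact h3
  have hd1 : deriv f =ᶠ[nhds 0] fun t => fderiv ℝ w (γ t) ξ - fderiv ℝ w x ξ := by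
    filter_upwards [hfd] with t ht using ht.deriv
  have hd2 : HasDerivAt (fun t => fderiv ℝ w (γ t) ξ - fderiv ℝ w x ξ)
      (fderiv ℝ (fderiv ℝ w) x ξ ξ) 0 := by
    have h1 : HasDerivAt (fun t => fderiv ℝ w (γ t)) (fderiv ℝ (fderiv ℝ w) x ξ) 0 := by
      have hh : HasFDerivAt (fderiv ℝ w) (fderiv ℝ (fderiv ℝ w) x) (γ 0) := by
        rw [hγ0]; exact (fderiv_diff hw).hasFDerivAt
      exact hh.comp_hasDerivAt 0 (hγd 0)
    have h2 := (h1.clm_apply (hasDerivAt_const (0:ℝ) ξ)).sub_const (fderiv ℝ w x ξ)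
    simpa using h2
  have hdd : deriv (deriv f) 0 = fderiv ℝ (fderiv ℝ w) x ξ ξ := by
    rw [hd1.deriv_eq]; exact hd2.deriv
  have hd0 : deriv f 0 = 0 := by
    rw [hd1.self_of_nhds]; simp [hγ0]
  have hc : ContinuousAt f 0 := hfd.self_of_nhds.continuousAt
  have hmax := isLocalMax_of_deriv_deriv_neg (by rw [hdd]; exact hneg) hd0 hc
  have hmin : ∀ᶠ t in nhds (0:ℝ), f 0 ≤ f t := by
    filter_upwards [hγt.eventually h] with t ht
    simp only [hf, hγ0]
    simp only [hγ, add_sub_cancel_left, map_smul, smul_eq_mul] at ht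
    simp only [hγ]
    linarith
  have hconst : f =ᶠ[nhds 0] fun _ => f 0 := by
    filter_upwards [hmax, hmin] with t h1 h2 using le_antisymm h1 h2
  have h1 : deriv f =ᶠ[nhds 0] deriv (fun _ : ℝ => f 0) := hconst.deriv
  have h2 := h1.deriv_eq
  rw [hdd] at h2
  simp at h2
  linarith

theorem hess_sub {n : ℕ} {u w : Eu n → ℝ} {x : Eu n} (hu : ContDiffAt ℝ 2 u x)
    (hw : ContDiffAt ℝ 2 w x) : hess n (fun y => u y - w y) x = hess n u x - hess n w x := by
  ext i j
  rw [Matrix.sub_apply, hess_apply (hu.sub hw), hess_apply hu, hess_apply hw]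
  have : fderiv ℝ (fun y => u y - w y) =ᶠ[nhds x] fun y => fderiv ℝ u y - fderiv ℝ w y := by
    filter_upwards [hu.eventually (by simp), hw.eventually (by simp)] with z h1 h2
    exact fderiv_fun_sub (h1.differentiableAt (by norm_num)) (h2.differentiableAt (by norm_num))
  rw [this.fderiv_eq, fderiv_fun_sub (fderiv_diff hu) (fderiv_diff hw)]
  simp

theorem hess_add {n : ℕ} {u w : Eu n → ℝ} {x : Eu n} (hu : ContDiffAt ℝ 2 u x)
    (hw : ContDiffAt ℝ 2 w x) : hess n (fun y => u y + w y) x = hess n u x + hess n w x := by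
  ext i j
  rw [Matrix.add_apply, hess_apply (hu.add hw), hess_apply hu, hess_apply hw]
  have : fderiv ℝ (fun y => u y + w y) =ᶠ[nhds x] fun y => fderiv ℝ u y + fderiv ℝ w y := by
    filter_upwards [hu.eventually (by simp), hw.eventually (by simp)] with z h1 h2
    exact fderiv_fun_add (h1.differentiableAt (by norm_num)) (h2.differentiableAt (by norm_num))
  rw [this.fderiv_eq, fderiv_fun_add (fderiv_diff hu) (fderiv_diff hw)]
  simp

theorem hess_comp {n : ℕ} {w : Eu n → ℝ} {x : Eu n} {f f' : ℝ → ℝ} {f'' : ℝ}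
    (hw : ContDiffAt ℝ 2 w x) (hf : ∀ s, HasDerivAt f (f' s) s)
    (hf' : HasDerivAt f' f'' (w x)) (hfc : ContDiff ℝ 2 f) :
    hess n (fun y => f (w y)) x =
      f'' • Matrix.vecMulVec (gvec n w x) (gvec n w x) + f' (w x) • hess n w x := by
  ext i j
  have hc : ContDiffAt ℝ 2 (fun y => f (w y)) x := hfc.contDiffAt.comp x hw
  rw [hess_apply hc]
  have : fderiv ℝ (fun y => f (w y)) =ᶠ[nhds x] fun y => f' (w y) • fderiv ℝ w y := by
    filter_upwards [hw.eventually (by simp)] with z h1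
    exact ((hf (w z)).comp_hasFDerivAt z (h1.differentiableAt (by norm_num)).hasFDerivAt).fderiv
  have hd : HasFDerivAt (fun y => f' (w y)) (f'' • fderiv ℝ w x) x :=
    hf'.comp_hasFDerivAt x (hw.differentiableAt (by norm_num)).hasFDerivAt
  rw [this.fderiv_eq, (hd.fun_smul (fderiv_diff hw).hasFDerivAt).fderiv]
  simp [hess_apply hw, Matrix.vecMulVec, gvec]
  ring

theorem gvec_sq {n : ℕ} {u : Eu n → ℝ} {x : Eu n} :
    (Matrix.vecMulVec (gvec n u x) (gvec n u x)).trace = gradNorm n u x ^ 2 := by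
  unfold gradNorm
  rw [← (InnerProductSpace.toDual ℝ (Eu n)).symm.norm_map, EuclideanSpace.norm_sq_eq]
  rw [Matrix.trace_vecMulVec, dotProduct]
  refine Finset.sum_congr rfl fun i _ => ?_
  have : gvec n u x i = (InnerProductSpace.toDual ℝ (Eu n)).symm (fderiv ℝ u x) i := by
    unfold gvec
    rw [← InnerProductSpace.toDual_symm_apply, EuclideanSpace.inner_single_right]
    simp
  rw [this, Real.norm_eq_abs, sq_abs, sq]

theorem sq_contDiff {n : ℕ} (z : Eu n) : ContDiff ℝ 2 (fun x : Eu n => ‖x - z‖ ^ 2) :=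
  (contDiff_id.sub contDiff_const).norm_sq ℝ

theorem sq_hasFDerivAt {n : ℕ} (z x : Eu n) :
    HasFDerivAt (fun x : Eu n => ‖x - z‖ ^ 2) ((2:ℝ) • innerSL ℝ (x - z)) x := by
  have := ((hasFDerivAt_id x).sub_const z).norm_sq
  simp only [id] at this
  rw [ContinuousLinearMap.comp_id] at this
  have h2 : (2:ℝ) • innerSL ℝ (x - z) = 2 • innerSL ℝ (x - z) := by
    rw [two_smul, two_nsmul]
  rw [h2]
  exact this

theorem sq_gvec {n : ℕ} (z x : Eu n) (i : Fin n) :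
    gvec n (fun x : Eu n => ‖x - z‖ ^ 2) x i = 2 * (x i - z i) := by
  unfold gvec
  rw [(sq_hasFDerivAt z x).fderiv]
  simp [EuclideanSpace.inner_single_right]

theorem sq_gradNorm {n : ℕ} (z x : Eu n) :
    gradNorm n (fun x : Eu n => ‖x - z‖ ^ 2) x = 2 * ‖x - z‖ := by
  unfold gradNorm
  rw [(sq_hasFDerivAt z x).fderiv, norm_smul, innerSL_apply_norm]
  simp

theorem sq_hess {n : ℕ} (z x : Eu n) :
    hess n (fun x : Eu n => ‖x - z‖ ^ 2) x = (2:ℝ) • (1 : Matrix (Fin n) (Fin n) ℝ) := by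
  ext i j
  unfold hess
  have : (fun y : Eu n => fderiv ℝ (fun x : Eu n => ‖x - z‖ ^ 2) y (EuclideanSpace.single j (1:ℝ)))
      = fun y => 2 * (y j - z j) := by
    ext y
    exact sq_gvec z y j
  rw [this]
  have h : HasFDerivAt (fun y : Eu n => 2 * (y j - z j))
      ((2:ℝ) • (EuclideanSpace.proj j : Eu n →L[ℝ] ℝ)) x := by
    have h1 : HasFDerivAt (fun y : Eu n => y j) (EuclideanSpace.proj j : Eu n →L[ℝ] ℝ) x :=
      (EuclideanSpace.proj j : Eu n →L[ℝ] ℝ).hasFDerivAt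
    exact (h1.sub_const (z j)).const_mul 2
  rw [h.fderiv]
  simp [Matrix.one_apply, eq_comm]


/-- the gradient as a vector of euclidean space -/
noncomputable def grd (n : ℕ) (w : Eu n → ℝ) (x : Eu n) : Eu n := WithLp.toLp 2 (gvec n w x)

theorem grd_inner {n : ℕ} (w : Eu n → ℝ) (x v : Eu n) :
    fderiv ℝ w x v = inner ℝ (grd n w x) v := by
  conv_lhs => rw [eu_sum v]
  rw [map_sum, PiLp.inner_apply]
  refine Finset.sum_congr rfl fun i _ => ?_
  simp [grd, gvec]

theorem grd_norm {n : ℕ} (w : Eu n → ℝ) (x : Eu n) : ‖grd n w x‖ = gradNorm n w x := by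
  have h := gvec_sq (n := n) (u := w) (x := x)
  rw [Matrix.trace_vecMulVec, dotProduct] at h
  have h2 : ‖grd n w x‖ ^ 2 = gradNorm n w x ^ 2 := by
    rw [EuclideanSpace.norm_sq_eq, ← h]
    refine Finset.sum_congr rfl fun i _ => ?_
    simp [grd, sq]
  exact (sq_eq_sq₀ (norm_nonneg _) (by unfold gradNorm; exact norm_nonneg _)).1 h2

theorem gradNorm_nonneg {n : ℕ} (w : Eu n → ℝ) (x : Eu n) : 0 ≤ gradNorm n w x := by
  unfold gradNorm; exact norm_nonneg _

theorem grd_hasFDerivAt {n : ℕ} {w : Eu n → ℝ} {x : Eu n} (hw : ContDiffAt ℝ 2 w x) :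
    HasFDerivAt (grd n w)
      (LinearMap.toContinuousLinearMap (Matrix.toEuclideanLin (hess n w x))) x := by
  rw [← hasFDerivWithinAt_univ, hasFDerivWithinAt_euclidean]
  intro i
  rw [hasFDerivWithinAt_univ]
  have h1 : HasFDerivAt (fun y => fderiv ℝ w y (EuclideanSpace.single i (1:ℝ)))
      ((fderiv ℝ (fderiv ℝ w) x).flip (EuclideanSpace.single i (1:ℝ))) x := by
    have := (fderiv_diff hw).hasFDerivAt.clm_apply
      (hasFDerivAt_const (EuclideanSpace.single i (1:ℝ)) x)
    simpa using this
  refine h1.congr_fderiv ?_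
  ext v
  simp only [ContinuousLinearMap.flip_apply, ContinuousLinearMap.comp_apply,
    LinearMap.coe_toContinuousLinearMap', PiLp.proj_apply, Matrix.toEuclideanLin_apply]
  rw [hw.isSymmSndFDerivAt (by simp)]
  conv_lhs => rw [eu_sum v]
  simp only [map_sum, map_smul, Matrix.mulVec, dotProduct, smul_eq_mul, hess_apply hw]
  refine Finset.sum_congr rfl fun j _ => ?_
  rw [mul_comm]

theorem img {n : ℕ} {w F : Eu n → ℝ} {E : Set (Eu n)} (hE : MeasurableSet E)
    (hw : ∀ x ∈ E, ContDiffAt ℝ 2 w x) (hp : ∀ x ∈ E, (hess n w x).PosSemidef)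
    (hF : ∀ x ∈ E, (hess n w x).trace ≤ F x) :
    volume (grd n w '' E) ≤ ∫⁻ x in E, ENNReal.ofReal (F x ^ n) := by
  refine (addHaar_image_le_lintegral_abs_det_fderiv volume hE
    (fun x hx => (grd_hasFDerivAt (hw x hx)).hasFDerivWithinAt)).trans ?_
  refine setLIntegral_mono' hE fun x hx => ?_
  apply ENNReal.ofReal_le_ofReal
  rw [LinearMap.det_toContinuousLinearMap, Matrix.toEuclideanLin_eq_toLin, LinearMap.det_toLin]
  obtain ⟨h1, h2⟩ := psd_det_le (hp x hx)
  rw [abs_of_nonneg h1]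
  exact h2.trans (pow_le_pow_left₀ (hp x hx).trace_nonneg (hF x hx) n)

theorem meas_contact {n : ℕ} {ι : Type*} {Ω : Set (Eu n)} (hΩ : IsOpen Ω) (f : ι → Eu n → ℝ)
    (hf : ∀ i, ContinuousOn (f i) Ω) : MeasurableSet {x | x ∈ Ω ∧ ∀ i, 0 ≤ f i x} := by
  have : {x | x ∈ Ω ∧ ∀ i, 0 ≤ f i x} = Ω \ ⋃ i, (Ω ∩ f i ⁻¹' Set.Iio 0) := by
    ext x
    simp only [Set.mem_ofPred_eq, Set.mem_sdiff, Set.mem_iUnion, Set.mem_inter_iff,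
      Set.mem_preimage, Set.mem_Iio, not_exists, not_and, not_lt]
    constructor
    · rintro ⟨h1, h2⟩; exact ⟨h1, fun i _ => h2 i⟩
    · rintro ⟨h1, h2⟩; exact ⟨h1, fun i => h2 i h1⟩
  rw [this]
  exact hΩ.measurableSet.diff
    (isOpen_iUnion fun i => (hf i).isOpen_inter_preimage hΩ isOpen_Iio).measurableSet

theorem fderiv_contOn {n : ℕ} {w : Eu n → ℝ} {Ω : Set (Eu n)}
    (hw : ∀ x ∈ Ω, ContDiffAt ℝ 2 w x) : ContinuousOn (fderiv ℝ w) Ω :=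
  fun x hx => ((fderiv_diff (hw x hx)).continuousAt).continuousWithinAt

theorem contOn_of {n : ℕ} {w : Eu n → ℝ} {Ω : Set (Eu n)}
    (hw : ∀ x ∈ Ω, ContDiffAt ℝ 2 w x) : ContinuousOn w Ω :=
  fun x hx => (hw x hx).continuousAt.continuousWithinAt

/-- volume of the unit ball, cut at one -/
noncomputable def om (n : ℕ) : ℝ := min 1 (volume (Metric.ball (0 : Eu n) 1)).toReal

theorem om_pos (n : ℕ) : 0 < om n := by
  unfold om
  apply lt_min one_pos
  exact ENNReal.toReal_pos (Metric.measure_ball_pos _ _ one_pos).ne' measure_ball_lt_top.ne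

theorem om_pow {n : ℕ} (hn : 1 ≤ n) :
    ENNReal.ofReal (om n ^ n) ≤ volume (Metric.ball (0 : Eu n) 1) := by
  rw [← ENNReal.ofReal_toReal (measure_ball_lt_top (μ := volume) (x := (0 : Eu n)) (r := 1)).ne]
  apply ENNReal.ofReal_le_ofReal
  calc om n ^ n ≤ om n ^ 1 := pow_le_pow_of_le_one (om_pos n).le (min_le_left _ _) hn
    _ ≤ _ := by rw [pow_one]; exact min_le_right _ _

theorem vol_ball_ge {n : ℕ} (hn : 1 ≤ n) (x : Eu n) {r : ℝ} (hr : 0 ≤ r) :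
    ENNReal.ofReal ((om n * r) ^ n) ≤ volume (Metric.ball x r) := by
  have : Nonempty (Fin n) := ⟨⟨0, hn⟩⟩
  rw [Measure.addHaar_ball volume x hr]
  simp only [finrank_euclideanSpace, Fintype.card_fin]
  rw [mul_pow, mul_comm, ENNReal.ofReal_mul (by positivity)]
  gcongr
  exact om_pow hn

theorem abp {n : ℕ} (hn : 1 ≤ n) {lam Lam : ℝ} (hlam : 0 < lam) (hLam : lam ≤ Lam)
    {u φ b : Eu n → ℝ} {S Ω : Set (Eu n)} {c : Eu n} {ρ G η : ℝ}
    (hS : IsCompact S) (hΩ : IsOpen Ω) (hΩS : Ω ⊆ S) (hSc : S ⊆ Metric.closedBall c ρ)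
    (hρ : 0 < ρ) (hG : 0 ≤ G) (hη : 0 ≤ η)
    (hu : ∀ x ∈ S, ContDiffAt ℝ 2 u x) (hφ : ∀ x ∈ S, ContDiffAt ℝ 2 φ x)
    (hb : ∀ x ∈ Ω, 0 ≤ b x)
    (hsup : ∀ x ∈ Ω, pucciMinus n lam Lam (hess n u x) ≤ b x * gradNorm n u x)
    (hsub : ∀ x ∈ Ω, ∀ A, Adm n lam Lam A → 0 ≤ (A * hess n φ x).trace)
    (hφG : ∀ x ∈ Ω, gradNorm n φ x ≤ G)
    (hbd : ∀ x ∈ S, x ∉ Ω → φ x ≤ u x)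
    (hbη : ∫⁻ x in Ω, ENNReal.ofReal (b x ^ n) ≤ ENNReal.ofReal (η ^ n))
    (hsmall : η / (lam * om n) ≤ 1 / 2) :
    ∀ x ∈ S, φ x - 4 * ρ * G * (η / (lam * om n)) ≤ u x := by
  intro x0 hx0
  by_contra hcon
  push Not at hcon
  have hom := om_pos n
  set κ := η / (lam * om n) with hκ
  have hκ0 : 0 ≤ κ := by positivity
  set h := φ x0 - u x0 with hh
  have hhpos : 0 < h := by
    have : 0 ≤ 4 * ρ * G * κ := by positivity
    linarith
  have hhbig : 4 * ρ * G * κ < h := by linarith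
  set H := h / (2 * ρ) with hH
  have hHpos : 0 < H := by positivity
  have hH2 : H * (2 * ρ) = h := by rw [hH]; field_simp
  set w : Eu n → ℝ := fun y => u y - φ y with hw
  have hwC : ∀ x ∈ S, ContDiffAt ℝ 2 w x := fun x hx => (hu x hx).sub (hφ x hx)
  have hwc : ContinuousOn w S := contOn_of hwC
  have hwCΩ : ∀ x ∈ Ω, ContDiffAt ℝ 2 w x := fun x hx => hwC x (hΩS hx)
  have hwcΩ : ContinuousOn w Ω := hwc.mono hΩS
  have hdc : ContinuousOn (fderiv ℝ w) Ω := fderiv_contOn hwCΩ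
  set E1 : Set (Eu n) := {x | x ∈ Ω ∧ ∀ z : S, 0 ≤ w z - w x - fderiv ℝ w x (z - x)} with hE1
  set E2 : Set (Eu n) := {x | x ∈ Ω ∧ ∀ _ : Unit, 0 ≤ H - ‖fderiv ℝ w x‖} with hE2
  have hE1m : MeasurableSet E1 := by
    apply meas_contact hΩ
    intro z
    exact (continuousOn_const.sub hwcΩ).sub (hdc.clm_apply (continuousOn_const.sub continuousOn_id))
  have hE2m : MeasurableSet E2 := by
    apply meas_contact hΩ
    intro z
    exact continuousOn_const.sub hdc.norm
  have hEm := hE1m.inter hE2m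
  have hball : Metric.ball (0 : Eu n) H ⊆ grd n w '' (E1 ∩ E2) := by
    intro p hp
    rw [mem_ball_zero_iff] at hp
    have hcont : ContinuousOn (fun x => w x - inner ℝ p (x - x0)) S :=
      hwc.sub (Continuous.continuousOn (by fun_prop))
    obtain ⟨x, hxS, hxmin⟩ := hS.exists_isMinOn ⟨x0, hx0⟩ hcont
    have hmin : ∀ z ∈ S, w x - inner ℝ p (x - x0) ≤ w z - inner ℝ p (z - x0) :=
      fun z hz => hxmin hz
    have hxΩ : x ∈ Ω := by
      by_contra hno
      have h1 := hbd x hxS hno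
      have h2 := hmin x0 hx0
      have h3 : inner ℝ p (x - x0) ≤ ‖p‖ * ‖x - x0‖ := real_inner_le_norm _ _
      have h4 : ‖x - x0‖ ≤ 2 * ρ := by
        have a1 := hSc hxS
        have a2 := hSc hx0
        rw [Metric.mem_closedBall] at a1 a2
        rw [← dist_eq_norm]
        linarith [dist_triangle_right x x0 c]
      have h5 : ‖p‖ * ‖x - x0‖ ≤ ‖p‖ * (2 * ρ) := by gcongr
      have h6 : ‖p‖ * (2 * ρ) < H * (2 * ρ) := by gcongr
      simp only [sub_self, inner_zero_right, hw] at h2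
      linarith
    have hD : fderiv ℝ w x = innerSL ℝ p := by
      have hloc : IsLocalMin (fun x => w x - inner ℝ p (x - x0)) x := by
        filter_upwards [hΩ.mem_nhds hxΩ] with z hz using hmin z (hΩS hz)
      have h1 := (hwCΩ x hxΩ).differentiableAt (by norm_num) |>.hasFDerivAt
      have h2 : HasFDerivAt (fun x : Eu n => inner ℝ p (x - x0)) (innerSL ℝ p) x := by
        have := (innerSL ℝ p).hasFDerivAt.comp x ((hasFDerivAt_id x).sub_const x0)
        simpa [Function.comp_def] using this
      have h3 := hloc.hasFDerivAt_eq_zero (h1.sub h2)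
      exact sub_eq_zero.1 h3
    have hgr : grd n w x = p := by
      apply ext_inner_right ℝ
      intro v
      rw [← grd_inner, hD]; simp
    refine ⟨x, ⟨⟨hxΩ, fun z => ?_⟩, ⟨hxΩ, fun _ => ?_⟩⟩, hgr⟩
    · have := hmin z z.2
      rw [hD]
      simp only [innerSL_apply_apply]
      have e : inner ℝ p ((z : Eu n) - x0) - inner ℝ p (x - x0) = inner ℝ p ((z : Eu n) - x) := by
        rw [← inner_sub_right]; congr 1; abel
      linarith
    · rw [hD, innerSL_apply_norm]; linarith
  have key := img (n := n) (w := w) (F := fun x => b x * ((G + H) / lam)) (E := E1 ∩ E2) hEm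
    (fun x hx => hwCΩ x hx.1.1)
    (fun x hx => hess_psd (hwCΩ x hx.1.1) (by
      filter_upwards [hΩ.mem_nhds hx.1.1] with z hz
      have := hx.1.2 ⟨z, hΩS hz⟩
      simp only at this
      linarith))
    (fun x hx => by
      have hxΩ := hx.1.1
      have hps : (hess n w x).PosSemidef := hess_psd (hwCΩ x hx.1.1) (by
        filter_upwards [hΩ.mem_nhds hx.1.1] with z hz
        have := hx.1.2 ⟨z, hΩS hz⟩
        simp only at this
        linarith)
      have he := hess_sub (hu x (hΩS hxΩ)) (hφ x (hΩS hxΩ))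
      rw [he] at hps
      have h1 := pucci_trace hLam (hsup x hxΩ) hps (hsub x hxΩ)
      have hgu : gradNorm n u x ≤ G + H := by
        have hh1 := hφG x hxΩ
        have hh2 := hx.2.2 ()
        have hd : fderiv ℝ w x = fderiv ℝ u x - fderiv ℝ φ x :=
          fderiv_fun_sub ((hu x (hΩS hxΩ)).differentiableAt (by norm_num))
            ((hφ x (hΩS hxΩ)).differentiableAt (by norm_num))
        unfold gradNorm at hh1 ⊢
        have : ‖fderiv ℝ u x‖ ≤ ‖fderiv ℝ φ x‖ + ‖fderiv ℝ w x‖ := by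
          have e : fderiv ℝ u x = fderiv ℝ φ x + fderiv ℝ w x := by rw [hd]; abel
          rw [e]; exact norm_add_le _ _
        linarith
      have h2 := mul_le_mul_of_nonneg_left hgu (hb x hxΩ)
      have h3 : lam * (hess n w x).trace ≤ b x * (G + H) := by
        rw [show hess n w x = hess n u x - hess n φ x from he]; linarith
      calc (hess n w x).trace = (lam * (hess n w x).trace) / lam := by field_simp
        _ ≤ (b x * (G + H)) / lam := by gcongr
        _ = b x * ((G + H) / lam) := by ring)
  have k1 : ENNReal.ofReal ((om n * H) ^ n) ≤ ENNReal.ofReal ((((G + H) / lam) * η) ^ n) := by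
    calc ENNReal.ofReal ((om n * H) ^ n) ≤ volume (Metric.ball (0 : Eu n) H) :=
          vol_ball_ge hn 0 hHpos.le
      _ ≤ volume (grd n w '' (E1 ∩ E2)) := measure_mono hball
      _ ≤ _ := key
      _ ≤ ∫⁻ x in Ω, ENNReal.ofReal ((b x * ((G + H) / lam)) ^ n) :=
          lintegral_mono_set (fun x hx => hx.1.1)
      _ = ∫⁻ x in Ω, ENNReal.ofReal (((G + H) / lam) ^ n) * ENNReal.ofReal (b x ^ n) := by
          refine setLIntegral_congr_fun hΩ.measurableSet fun x hx => ?_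
          rw [← ENNReal.ofReal_mul (by positivity), ← mul_pow, mul_comm]
      _ = ENNReal.ofReal (((G + H) / lam) ^ n) * ∫⁻ x in Ω, ENNReal.ofReal (b x ^ n) :=
          lintegral_const_mul' _ _ ENNReal.ofReal_ne_top
      _ ≤ ENNReal.ofReal (((G + H) / lam) ^ n) * ENNReal.ofReal (η ^ n) := by gcongr
      _ = _ := by rw [← ENNReal.ofReal_mul (by positivity), ← mul_pow]
  rw [ENNReal.ofReal_le_ofReal_iff (by positivity)] at k1
  have k2 : om n * H ≤ ((G + H) / lam) * η := le_of_pow_le_pow_left₀ (by omega) (by positivity) k1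
  have k3 : H ≤ κ * (G + H) := by
    have : H = (om n * H) / om n := by field_simp
    rw [this]
    calc (om n * H) / om n ≤ (((G + H) / lam) * η) / om n := by gcongr
      _ = κ * (G + H) := by rw [hκ]; field_simp
      _ = _ := by rw [← this]
  have k4 : κ * H ≤ 1 / 2 * H := by gcongr
  have k5 : H ≤ 2 * κ * G := by nlinarith
  have k6 : h ≤ 4 * ρ * G * κ := by
    rw [← hH2]
    calc H * (2 * ρ) ≤ (2 * κ * G) * (2 * ρ) := by gcongr
      _ = _ := by ring
  linarith


/-- nonnegative supersolutions in the unit ball -/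
structure Sup (n : ℕ) (lam Lam q K : ℝ) (b u : Eu n → ℝ) : Prop where
  bc : ContinuousOn b (Metric.ball 0 1)
  b0 : ∀ x ∈ Metric.ball (0 : Eu n) 1, 0 ≤ b x
  bL : LpNormE n q b (Metric.ball 0 1) ≤ ENNReal.ofReal K
  uC : ∀ x ∈ Metric.ball (0 : Eu n) 1, ContDiffAt ℝ 2 u x
  u0 : ∀ x ∈ Metric.ball (0 : Eu n) 1, 0 ≤ u x
  sup : ∀ x ∈ Metric.ball (0 : Eu n) 1,
    pucciMinus n lam Lam (hess n u x) ≤ b x * gradNorm n u x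

theorem holder_b {n : ℕ} (hn : 1 ≤ n) {q K : ℝ} (hq : (n : ℝ) < q) (hK : 0 < K) :
    ∃ K' : ℝ, 0 < K' ∧ ∀ b : Eu n → ℝ, ContinuousOn b (Metric.ball 0 1) →
      (∀ x ∈ Metric.ball (0 : Eu n) 1, 0 ≤ b x) →
      LpNormE n q b (Metric.ball 0 1) ≤ ENNReal.ofReal K →
      ∀ (Ω : Set (Eu n)) (x : Eu n) (ρ : ℝ), 0 ≤ ρ → MeasurableSet Ω →
        Ω ⊆ Metric.ball 0 1 → Ω ⊆ Metric.closedBall x ρ →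
        ∫⁻ y in Ω, ENNReal.ofReal (b y ^ n) ≤ ENNReal.ofReal ((K' * ρ ^ (1 - n / q)) ^ n) := by
  have hn0 : (0:ℝ) < n := by exact_mod_cast hn
  have hq0 : 0 < q := hn0.trans hq
  set ω := (volume (Metric.ball (0 : Eu n) 1)).toReal with hω
  have hω0 : 0 ≤ ω := ENNReal.toReal_nonneg
  have hωe : volume (Metric.ball (0 : Eu n) 1) = ENNReal.ofReal ω :=
    (ENNReal.ofReal_toReal measure_ball_lt_top.ne).symm
  set γ := 1 - (n:ℝ) / q with hγ
  have hγ0 : 0 < γ := by rw [hγ, sub_pos, div_lt_one hq0]; exact hq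
  refine ⟨K * (1 + ω ^ γ), by positivity, ?_⟩
  intro b hb hb0 hbL Ω x ρ hρ hΩm hΩ1 hΩ2
  have hp : 1 < q / n := by rwa [one_lt_div hn0]
  have hpq : Real.HolderConjugate (q / n) (1 / γ) := by
    rw [Real.holderConjugate_iff]
    refine ⟨hp, ?_⟩
    rw [hγ]; simp
  have hbm : AEMeasurable (fun y => ENNReal.ofReal (b y ^ n)) (volume.restrict Ω) := by
    have := ((hb.mono hΩ1).pow n).aemeasurable (μ := volume) hΩm
    exact this.ennreal_ofReal
  have h1 := ENNReal.lintegral_mul_le_Lp_mul_Lq (volume.restrict Ω) hpq hbm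
    (aemeasurable_const (b := (1:ℝ≥0∞)))
  have e1 : ∀ y ∈ Ω, ENNReal.ofReal (b y ^ n) ^ (q / n) = ENNReal.ofReal (|b y| ^ q) := by
    intro y hy
    have hby := hb0 y (hΩ1 hy)
    rw [ENNReal.ofReal_rpow_of_nonneg (by positivity) (by positivity), abs_of_nonneg hby,
      ← Real.rpow_natCast, ← Real.rpow_mul hby]
    congr 2; field_simp
  have h2 : (∫⁻ y in Ω, ENNReal.ofReal (b y ^ n) ^ (q / n)) ^ (1 / (q / n))
      ≤ ENNReal.ofReal (K ^ n) := by
    rw [setLIntegral_congr_fun hΩm e1]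
    calc (∫⁻ y in Ω, ENNReal.ofReal (|b y| ^ q)) ^ (1 / (q / n))
        ≤ (∫⁻ y in Metric.ball 0 1, ENNReal.ofReal (|b y| ^ q)) ^ (1 / (q / n)) := by
          gcongr
      _ = LpNormE n q b (Metric.ball 0 1) ^ n := by
          unfold LpNormE
          rw [← ENNReal.rpow_natCast, ← ENNReal.rpow_mul]
          congr 1; field_simp
      _ ≤ ENNReal.ofReal K ^ n := by gcongr
      _ = _ := by rw [ENNReal.ofReal_pow hK.le]
  have h3 : (∫⁻ _ in Ω, (1:ℝ≥0∞) ^ (1 / γ)) ^ (1 / (1 / γ))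
      ≤ ENNReal.ofReal (ω ^ γ * (ρ ^ γ) ^ n) := by
    simp only [ENNReal.one_rpow, lintegral_const, Measure.restrict_apply MeasurableSet.univ,
      Set.univ_inter, one_mul, one_div_one_div]
    calc volume Ω ^ γ ≤ volume (Metric.closedBall x ρ) ^ γ := by gcongr
      _ = ENNReal.ofReal (ρ ^ n * ω) ^ γ := by
        rw [Measure.addHaar_closedBall volume x hρ, hωe, ← ENNReal.ofReal_mul (by positivity)]
        simp
      _ = ENNReal.ofReal ((ρ ^ n * ω) ^ γ) := by
        rw [ENNReal.ofReal_rpow_of_nonneg (by positivity) hγ0.le]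
      _ = _ := by
        congr 1
        rw [Real.mul_rpow (by positivity) hω0, mul_comm]
        congr 1
        rw [← Real.rpow_natCast, ← Real.rpow_natCast, ← Real.rpow_mul hρ, ← Real.rpow_mul hρ,
          mul_comm]
  calc ∫⁻ y in Ω, ENNReal.ofReal (b y ^ n)
      = ∫⁻ y in Ω, ((fun y : Eu n => ENNReal.ofReal (b y ^ n)) *
          (fun _ : Eu n => (1:ℝ≥0∞)) : Eu n → ℝ≥0∞) y := by simp
    _ ≤ _ := h1
    _ ≤ ENNReal.ofReal (K ^ n) * ENNReal.ofReal (ω ^ γ * (ρ ^ γ) ^ n) := by gcongr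
    _ = ENNReal.ofReal (K ^ n * (ω ^ γ * (ρ ^ γ) ^ n)) := by
        rw [← ENNReal.ofReal_mul (by positivity)]
    _ ≤ _ := by
        apply ENNReal.ofReal_le_ofReal
        rw [mul_pow, mul_pow, mul_assoc]
        have : ω ^ γ ≤ (1 + ω ^ γ) ^ n := by
          have h0 : 0 ≤ ω ^ γ := by positivity
          calc ω ^ γ ≤ (1 + ω ^ γ) ^ 1 := by linarith
            _ ≤ _ := pow_le_pow_right₀ (by linarith) hn
        gcongr

theorem weak_b {n : ℕ} {b : Eu n → ℝ} {T η : ℝ} (hb : ContinuousOn b (Metric.ball 0 1))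
    (hT : 0 < T)
    (hbη : ∫⁻ y in Metric.ball 0 1, ENNReal.ofReal (b y ^ n) ≤ ENNReal.ofReal η) :
    volume {y : Eu n | y ∈ Metric.ball (0 : Eu n) 1 ∧ T < b y} ≤ ENNReal.ofReal (η / T ^ n) := by
  have hm : AEMeasurable (fun y => ENNReal.ofReal (b y ^ n))
      (volume.restrict (Metric.ball (0 : Eu n) 1)) :=
    ((hb.pow n).aemeasurable (μ := volume) measurableSet_ball).ennreal_ofReal
  have h := mul_meas_ge_le_lintegral₀ hm (ENNReal.ofReal (T ^ n))
  have hsub : volume {y : Eu n | y ∈ Metric.ball (0 : Eu n) 1 ∧ T < b y} ≤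
      (volume.restrict (Metric.ball (0 : Eu n) 1))
        {y | ENNReal.ofReal (T ^ n) ≤ ENNReal.ofReal (b y ^ n)} := by
    have hle := Measure.le_restrict_apply (μ := volume) (Metric.ball (0 : Eu n) 1)
      {y | ENNReal.ofReal (T ^ n) ≤ ENNReal.ofReal (b y ^ n)}
    refine le_trans (measure_mono ?_) hle
    rintro y ⟨h1, h2⟩
    exact ⟨ENNReal.ofReal_le_ofReal (pow_le_pow_left₀ hT.le h2.le n), h1⟩
  have hTn : 0 < T ^ n := by positivity
  rw [ENNReal.ofReal_div_of_pos hTn, ENNReal.le_div_iff_mul_le (by simp [hTn]) (by simp)]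
  calc _ ≤ _ := mul_le_mul_left hsub _
    _ = _ := mul_comm _ _
    _ ≤ _ := h.trans hbη


theorem small_rpow {γ C θ : ℝ} (hγ : 0 < γ) (hC : 0 < C) (hθ : 0 < θ) :
    ∃ R0 : ℝ, 0 < R0 ∧ ∀ R, 0 ≤ R → R ≤ R0 → C * R ^ γ ≤ θ := by
  refine ⟨(θ / C) ^ (1 / γ), by positivity, fun R h0 hR => ?_⟩
  calc C * R ^ γ ≤ C * ((θ / C) ^ (1 / γ)) ^ γ := by gcongr
    _ = C * (θ / C) := by
      rw [← Real.rpow_mul (by positivity), one_div_mul_cancel hγ.ne', Real.rpow_one]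
    _ = θ := by field_simp

theorem trace_comp_lower {n : ℕ} {lam Lam : ℝ}
    {A : Matrix (Fin n) (Fin n) ℝ} (hA : Adm n lam Lam A) {w : Eu n → ℝ} {x : Eu n} {p m : ℝ}
    (hp : 0 ≤ p) (hm : 0 ≤ m) :
    p * lam * gradNorm n w x ^ 2 - m * (Lam * n) ≤
      (A * (p • Matrix.vecMulVec (gvec n w x) (gvec n w x)
        + (-m) • (1 : Matrix (Fin n) (Fin n) ℝ))).trace := by
  have h1 := hA.lower (psd_vecMulVec (gvec n w x))
  rw [gvec_sq] at h1
  have h2 := hA.trace_le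
  rw [Matrix.mul_add, Matrix.trace_add, Matrix.mul_smul, Matrix.mul_smul, Matrix.trace_smul,
    Matrix.trace_smul, Matrix.mul_one, smul_eq_mul, smul_eq_mul]
  nlinarith [mul_le_mul_of_nonneg_left h1 hp, mul_le_mul_of_nonneg_left h2 hm]

theorem gradNorm_comp {n : ℕ} {w : Eu n → ℝ} {x : Eu n} {f : ℝ → ℝ} {f' : ℝ}
    (hw : DifferentiableAt ℝ w x) (hf : HasDerivAt f f' (w x)) :
    gradNorm n (fun y => f (w y)) x = |f'| * gradNorm n w x := by
  unfold gradNorm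
  have := (hf.comp_hasFDerivAt x hw.hasFDerivAt).fderiv
  rw [show fderiv ℝ (fun y => f (w y)) x = f' • fderiv ℝ w x from this, norm_smul,
    Real.norm_eq_abs]

set_option maxHeartbeats 1000000 in
theorem doubling {n : ℕ} (hn : 1 ≤ n) {lam Lam : ℝ} (hlam : 0 < lam) (hLam : lam ≤ Lam)
    {q K : ℝ} (hq : (n : ℝ) < q) (hK : 0 < K) :
    ∃ R0 c : ℝ, 0 < R0 ∧ 0 < c ∧ c ≤ 1 ∧ ∀ b u : Eu n → ℝ, Sup n lam Lam q K b u →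
      ∀ (z : Eu n) (R t : ℝ), 0 < R → R ≤ R0 → ‖z‖ + R < 1 → 0 ≤ t →
        (∀ x ∈ Metric.ball z (R / 4), t ≤ u x) → ∀ x ∈ Metric.ball z (R / 2), c * t ≤ u x := by
  obtain ⟨K', hK', hb⟩ := holder_b hn hq hK
  have hn0 : (0:ℝ) < n := by exact_mod_cast hn
  have hq0 : 0 < q := hn0.trans hq
  set γ := 1 - (n:ℝ) / q with hγ
  have hγ0 : 0 < γ := by rw [hγ, sub_pos, div_lt_one hq0]; exact hq
  have hom := om_pos n
  have hLam0 : 0 < Lam := hlam.trans_le hLam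
  obtain ⟨k, hk⟩ := exists_nat_ge (50 * Lam * n / (4 * lam))
  have hk' : 50 * Lam * n ≤ (k + 1) * (4 * lam) := by
    rw [div_le_iff₀ (by positivity)] at hk
    nlinarith
  set m : ℝ := (k:ℝ) + 2 with hm
  have hm2 : 2 ≤ m := by rw [hm]; linarith [(Nat.cast_nonneg k : (0:ℝ) ≤ k)]
  set θ : ℝ := (3/4) ^ (k + 2) / (16 * m) with hθ
  have hθ0 : 0 < θ := by positivity
  have h34 : ((3:ℝ)/4) ^ (k + 2) ≤ 1 := pow_le_one₀ (by norm_num) (by norm_num)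
  have hθ1 : θ ≤ 1 / 2 := by
    rw [hθ, div_le_iff₀ (by positivity)]; linarith
  obtain ⟨R0, hR0, hsm⟩ := small_rpow (C := K' / (lam * om n)) hγ0 (by positivity) hθ0
  refine ⟨R0, 1/2 * (3/4) ^ (k + 2), hR0, by positivity, by linarith, ?_⟩
  intro b u hS z R t hR hRR hzR ht hut x hx
  by_cases hx5 : ‖x - z‖ < R / 5
  · have := hut x (by rw [Metric.mem_ball, dist_eq_norm]; linarith)
    nlinarith
  push Not at hx5
  rw [Metric.mem_ball, dist_eq_norm] at hx
  set S : Set (Eu n) := {y | R / 5 ≤ ‖y - z‖ ∧ ‖y - z‖ ≤ R} with hSd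
  set Ω : Set (Eu n) := {y | R / 5 < ‖y - z‖ ∧ ‖y - z‖ < R} with hΩd
  have hcn : Continuous fun y : Eu n => ‖y - z‖ := by fun_prop
  have hScb : S ⊆ Metric.closedBall z R := fun y hy => by
    rw [Metric.mem_closedBall, dist_eq_norm]; exact hy.2
  have hSB : S ⊆ Metric.ball 0 1 := fun y hy => by
    rw [mem_ball_zero_iff]
    have h2 : ‖y‖ ≤ ‖y - z‖ + ‖z‖ := by simpa using norm_add_le (y - z) z
    linarith [hy.2]
  have hSc : IsCompact S := by
    apply (isCompact_closedBall z R).of_isClosed_subset _ hScb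
    exact (isClosed_le continuous_const hcn).inter (isClosed_le hcn continuous_const)
  have hΩo : IsOpen Ω := (isOpen_lt continuous_const hcn).inter (isOpen_lt hcn continuous_const)
  have hΩS : Ω ⊆ S := fun y hy => ⟨hy.1.le, hy.2.le⟩
  set f : ℝ → ℝ := fun s => t * (1 - s / R ^ 2) ^ (k + 2) with hf
  set f' : ℝ → ℝ := fun s => -(t * m / R ^ 2) * (1 - s / R ^ 2) ^ (k + 1) with hf'
  have hbase : ∀ s, HasDerivAt (fun s : ℝ => 1 - s / R ^ 2) (-(1 / R ^ 2)) s := fun s =>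
    ((hasDerivAt_id s).div_const (R ^ 2)).const_sub 1
  have hfd : ∀ s, HasDerivAt f (f' s) s := by
    intro s
    have := ((hbase s).fun_pow (k + 2)).const_mul t
    refine this.congr_deriv ?_
    simp only [hf', hm]
    push_cast
    ring
  have hf'd : ∀ s, HasDerivAt f' (t * m / R ^ 2 * ((k + 1) / R ^ 2) * (1 - s / R ^ 2) ^ k) s := by
    intro s
    have := ((hbase s).fun_pow (k + 1)).const_mul (-(t * m / R ^ 2))
    refine this.congr_deriv ?_
    push_cast
    ring
  have hfC : ContDiff ℝ 2 f := by
    simp only [hf]; fun_prop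
  set w : Eu n → ℝ := fun y => ‖y - z‖ ^ 2 with hw
  have hwC : ∀ y, ContDiffAt ℝ 2 w y := fun y => (sq_contDiff z).contDiffAt
  have hgw : ∀ y, gradNorm n w y = 2 * ‖y - z‖ := sq_gradNorm z
  have hrat : ∀ y ∈ S, 1 / 25 ≤ w y / R ^ 2 ∧ w y / R ^ 2 ≤ 1 := by
    intro y hy
    simp only [hw]
    rw [← div_pow]
    have h1 : 1 / 5 ≤ ‖y - z‖ / R := by rw [le_div_iff₀ hR]; linarith [hy.1]
    have h2 : ‖y - z‖ / R ≤ 1 := by rw [div_le_one hR]; exact hy.2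
    constructor <;> nlinarith
  have key := abp hn hlam hLam (u := u) (φ := fun y => f (w y)) (b := b) (S := S) (Ω := Ω)
    (c := z) (ρ := R) (G := 2 * m * t / R) (η := K' * R ^ γ) hSc hΩo hΩS hScb hR (by positivity)
    (by positivity) (fun y hy => hS.uC y (hSB hy)) (fun y hy => hfC.contDiffAt.comp y (hwC y))
    (fun y hy => hS.b0 y (hSB (hΩS hy))) (fun y hy => hS.sup y (hSB (hΩS hy)))
    (by
      intro y hy A hA
      rw [hess_comp (hwC y) hfd (hf'd (w y)) hfC]
      have e : hess n w y = (2:ℝ) • (1 : Matrix (Fin n) (Fin n) ℝ) := sq_hess z y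
      rw [e, smul_smul]
      obtain ⟨h1, h2⟩ := hrat y (hΩS hy)
      set σ := w y / R ^ 2 with hσ
      have h3 : f' (w y) * 2 = -((t * m / R ^ 2) * (1 - σ) ^ (k + 1) * 2) := by
        simp only [hf']; ring
      rw [h3]
      have h1s : 0 ≤ 1 - σ := by linarith
      refine le_trans ?_ (trace_comp_lower hA (by positivity) (by positivity))
      rw [hgw]
      have e2 : (2 * ‖y - z‖) ^ 2 = 4 * σ * R ^ 2 := by
        rw [hσ]; simp only [hw]; field_simp; ring
      rw [e2]
      have e3 : t * m / R ^ 2 * ((k + 1) / R ^ 2) * (1 - σ) ^ k * lam * (4 * σ * R ^ 2)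
          - t * m / R ^ 2 * (1 - σ) ^ (k + 1) * 2 * (Lam * n)
          = t * m / R ^ 2 * (1 - σ) ^ k * ((k + 1) * (4 * lam) * σ - 2 * Lam * n * (1 - σ)) := by
        field_simp
        ring
      rw [e3]
      have : 0 ≤ (k + 1) * (4 * lam) * σ - 2 * Lam * n * (1 - σ) := by
        have a1 : 50 * Lam * n * (1/25) ≤ (k + 1) * (4 * lam) * σ := by gcongr
        have a2 : 2 * Lam * n * (1 - σ) ≤ 2 * Lam * n * 1 := by gcongr; linarith
        linarith
      positivity)
    (by
      intro y hy
      rw [gradNorm_comp ((hwC y).differentiableAt (by norm_num)) (hfd (w y)), hgw]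
      obtain ⟨h1, h2⟩ := hrat y (hΩS hy)
      simp only [hf']
      rw [neg_mul, abs_neg, abs_of_nonneg (by
        have : 0 ≤ 1 - w y / R ^ 2 := by linarith
        positivity)]
      have h5 : (1 - w y / R ^ 2) ^ (k + 1) ≤ 1 := pow_le_one₀ (by linarith) (by linarith)
      calc t * m / R ^ 2 * (1 - w y / R ^ 2) ^ (k + 1) * (2 * ‖y - z‖)
          ≤ t * m / R ^ 2 * 1 * (2 * R) := by
            have := hy.2.le
            have h0 : 0 ≤ (1 - w y / R ^ 2) ^ (k + 1) := pow_nonneg (by linarith) _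
            gcongr
        _ = 2 * m * t / R := by field_simp)
    (by
      intro y hy hyΩ
      by_cases h5 : ‖y - z‖ = R / 5
      · have h1 := hut y (by rw [Metric.mem_ball, dist_eq_norm, h5]; linarith)
        refine le_trans ?_ h1
        obtain ⟨h3, h4⟩ := hrat y hy
        simp only [hf]
        have : (1 - w y / R ^ 2) ^ (k + 2) ≤ 1 := pow_le_one₀ (by linarith) (by linarith)
        nlinarith
      · have h6 : ‖y - z‖ = R := by
          by_contra h7
          exact hyΩ ⟨lt_of_le_of_ne hy.1 (Ne.symm h5), lt_of_le_of_ne hy.2 h7⟩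
        have : f (w y) = 0 := by
          simp only [hf, hw, h6]
          rw [div_self (by positivity)]; simp
        simp only [this]
        exact hS.u0 y (hSB hy))
    (hb b hS.bc hS.b0 hS.bL Ω z R hR.le hΩo.measurableSet (hΩS.trans hSB) (hΩS.trans hScb))
    (by
      have := hsm R hR.le hRR
      calc _ = K' / (lam * om n) * R ^ γ := by ring
        _ ≤ θ := this
        _ ≤ _ := hθ1)
  have hfin := key x ⟨hx5, by linarith⟩
  have hκ : K' * R ^ γ / (lam * om n) ≤ θ := by
    calc _ = K' / (lam * om n) * R ^ γ := by ring
        _ ≤ θ := hsm R hR.le hRR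
  have herr : 4 * R * (2 * m * t / R) * (K' * R ^ γ / (lam * om n)) ≤
      1 / 2 * (3/4) ^ (k + 2) * t := by
    calc 4 * R * (2 * m * t / R) * (K' * R ^ γ / (lam * om n))
        ≤ 4 * R * (2 * m * t / R) * θ := by gcongr
      _ = _ := by rw [hθ]; field_simp; ring
  have hφ : (3/4) ^ (k + 2) * t ≤ f (w x) := by
    simp only [hf, hw]
    rw [mul_comm]
    gcongr
    rw [← div_pow]
    have : ‖x - z‖ / R ≤ 1 / 2 := by rw [div_le_iff₀ hR]; linarith
    have h0 : 0 ≤ ‖x - z‖ / R := by positivity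
    nlinarith
  linarith


theorem lt_one_aux {s t : ℝ} (hs : 0 < s) (h : s ≤ 1 - t ^ 2) : t < 1 := by nlinarith

theorem one_sub_aux {t : ℝ} (h0 : 0 ≤ t) (h1 : t ≤ 1) : 1 - t ≤ 1 - t ^ 2 := by nlinarith

set_option maxHeartbeats 1000000 in
/-- one step of the boundary layer iteration -/
theorem layer {n : ℕ} (hn : 1 ≤ n) {lam Lam : ℝ} (hlam : 0 < lam) (hLam : lam ≤ Lam)
    {q K K' : ℝ} (hK' : 0 < K')
    {b u : Eu n → ℝ} (hS : Sup n lam Lam q K b u)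
    (hb : ∀ (Ω : Set (Eu n)) (x : Eu n) (ρ : ℝ), 0 ≤ ρ → MeasurableSet Ω →
        Ω ⊆ Metric.ball 0 1 → Ω ⊆ Metric.closedBall x ρ →
        ∫⁻ y in Ω, ENNReal.ofReal (b y ^ n) ≤ ENNReal.ofReal ((K' * ρ ^ (1 - n / q)) ^ n))
    {r ρ θ a C : ℝ} (ha : 0 ≤ a) (hr : 0 < r) (hr2 : r ≤ 1 / 2) (hr3 : 2 * Lam * n * r ≤ lam)
    (hρ : 0 < ρ) (hρθ : ρ ^ 2 * θ = r ^ 2) (hrρ : r ≤ ρ) (hθ0 : 0 < θ) (hθ1 : θ ≤ 1) (hrθ : r ≤ θ)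
    (h1 : ρ * ρ ^ (1 - n / q) ≤ r * θ) (h2 : ρ ^ (1 - n / q) ≤ θ)
    (hC : C = 5 * (Lam * n / lam) + 9 + 112 * (K' / (lam * om n))) (hCθ : C * θ ≤ 1 / 2)
    (hH : ∀ x, r ≤ 1 - ‖x‖ ^ 2 → a * (1 - ‖x‖ ^ 2) ≤ u x) :
    ∀ x, r / 2 ≤ 1 - ‖x‖ ^ 2 → a * (1 - C * θ) * (1 - ‖x‖ ^ 2) ≤ u x := by
  intro x hx
  have hom := om_pos n
  have hLam0 : 0 < Lam := hlam.trans_le hLam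
  have hn0 : (0:ℝ) < n := by exact_mod_cast hn
  have hC0 : 0 < C := by rw [hC]; positivity
  by_cases hxr : r ≤ 1 - ‖x‖ ^ 2
  · refine le_trans ?_ (hH x hxr)
    have : 0 ≤ a * (1 - ‖x‖ ^ 2) := mul_nonneg ha (by linarith)
    have h3 : 0 ≤ C * θ := by positivity
    linarith [mul_nonneg h3 this]
  push Not at hxr
  set κ := K' / (lam * om n) with hκ
  have hκ0 : 0 < κ := by positivity
  set C1 := Lam * n / lam with hC1
  have hC10 : 0 < C1 := by positivity
  set E := 4 * r / ρ ^ 2 with hE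
  have hE0 : 0 < E := by positivity
  have hEr : E * r = 4 * θ := by
    rw [hE]; field_simp; rw [← hρθ]
  have hEρ : E * ρ ≤ 4 := by
    have : E * ρ = 4 * (r / ρ) := by rw [hE]; field_simp
    rw [this]
    have : r / ρ ≤ 1 := by rw [div_le_one hρ]; exact hrρ
    linarith
  have hEρ2 : E * ρ ^ 2 = 4 * r := by rw [hE]; field_simp
  set B := C1 * (1 + E) with hB
  have hB0 : 0 < B := by positivity
  set m := B * r with hm
  have hm0 : 0 < m := by positivity
  have hm5 : m ≤ 5 * C1 * θ := by
    have : m = C1 * (r + E * r) := by rw [hm, hB]; ring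
    rw [this, hEr]; linarith [mul_le_mul_of_nonneg_left hrθ hC10.le]
  have h5C : 5 * C1 * θ ≤ C * θ := by
    rw [hC]; gcongr
    linarith
  have hm1 : m ≤ 1 / 2 := by linarith
  set δ := θ * r / 2 with hδ
  have hδ0 : 0 < δ := by positivity
  have hδr : δ ≤ r / 2 := by rw [hδ]; linarith [mul_le_mul_of_nonneg_right hθ1 hr.le]
  set xh : Eu n := (‖x‖⁻¹) • x with hxh
  have hxn : 0 < ‖x‖ := by
    by_contra h0
    have : ‖x‖ = 0 := le_antisymm (not_lt.1 h0) (norm_nonneg _)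
    rw [this] at hxr; norm_num at hxr; linarith
  have hx1 : ‖x‖ < 1 := lt_one_aux (half_pos hr) hx
  have hxxh : ‖x - xh‖ ≤ r := by
    have e : x - xh = (1 - ‖x‖⁻¹) • x := by rw [hxh, sub_smul, one_smul]
    rw [e, norm_smul, Real.norm_eq_abs]
    have h3 : 1 ≤ ‖x‖⁻¹ := (one_le_inv₀ hxn).2 hx1.le
    rw [abs_of_nonpos (by linarith)]
    have : -(1 - ‖x‖⁻¹) * ‖x‖ = 1 - ‖x‖ := by field_simp; ring
    rw [this]; linarith [one_sub_aux hxn.le hx1.le]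
  set S : Set (Eu n) := {y | (δ ≤ 1 - ‖y‖ ^ 2 ∧ 1 - ‖y‖ ^ 2 ≤ r) ∧ ‖y - xh‖ ≤ ρ} with hSd
  set Ω : Set (Eu n) := {y | (δ < 1 - ‖y‖ ^ 2 ∧ 1 - ‖y‖ ^ 2 < r) ∧ ‖y - xh‖ < ρ} with hΩd
  have hcn : Continuous fun y : Eu n => ‖y - xh‖ := by fun_prop
  have hcD : Continuous fun y : Eu n => 1 - ‖y‖ ^ 2 := by fun_prop
  have hScb : S ⊆ Metric.closedBall xh ρ := fun y hy => by
    rw [Metric.mem_closedBall, dist_eq_norm]; exact hy.2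
  have hSB : S ⊆ Metric.ball 0 1 := fun y hy => by
    rw [mem_ball_zero_iff]
    exact lt_one_aux hδ0 hy.1.1
  have hSc : IsCompact S := by
    apply (isCompact_closedBall xh ρ).of_isClosed_subset _ hScb
    exact ((isClosed_le continuous_const hcD).inter (isClosed_le hcD continuous_const)).inter
      (isClosed_le hcn continuous_const)
  have hΩo : IsOpen Ω := ((isOpen_lt continuous_const hcD).inter
    (isOpen_lt hcD continuous_const)).inter (isOpen_lt hcn continuous_const)
  have hΩS : Ω ⊆ S := fun y hy => ⟨⟨hy.1.1.le, hy.1.2.le⟩, hy.2.le⟩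
  set f : ℝ → ℝ := fun s => a * ((1 - m) * (1 - s) + B * (1 - s) ^ 2 - δ) with hf
  set f' : ℝ → ℝ := fun s => -(a * ((1 - m) + 2 * B * (1 - s))) with hf'
  have hfd : ∀ s, HasDerivAt f (f' s) s := by
    intro s
    have hb1 : HasDerivAt (fun s : ℝ => 1 - s) (-1) s := (hasDerivAt_id s).const_sub 1
    have := (((hb1.const_mul (1 - m)).fun_add ((hb1.fun_pow 2).const_mul B)).sub_const δ).const_mul a
    refine this.congr_deriv ?_
    simp only [hf']
    push_cast
    ring
  have hf'd : ∀ s, HasDerivAt f' (a * (2 * B)) s := by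
    intro s
    have hb1 : HasDerivAt (fun s : ℝ => 1 - s) (-1) s := (hasDerivAt_id s).const_sub 1
    have := (((hb1.const_mul (2 * B)).const_add (1 - m)).const_mul a).neg
    refine this.congr_deriv ?_
    ring
  have hfC : ContDiff ℝ 2 f := by
    simp only [hf]; fun_prop
  set w : Eu n → ℝ := fun y => ‖y - 0‖ ^ 2 with hw
  have hww : ∀ y, w y = ‖y‖ ^ 2 := fun y => by simp [hw]
  have hwC : ∀ y, ContDiffAt ℝ 2 w y := fun y => (sq_contDiff 0).contDiffAt
  have hgw : ∀ y, gradNorm n w y = 2 * ‖y‖ := fun y => by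
    have := sq_gradNorm 0 y; rw [sub_zero] at this; exact this
  set g : ℝ → ℝ := fun s => (a * E) * s with hg
  have hgd : ∀ s, HasDerivAt g (a * E) s := by
    intro s
    have := (hasDerivAt_id s).const_mul (a * E)
    simpa using this
  have hgC : ContDiff ℝ 2 g := by
    simp only [hg]; fun_prop
  set w2 : Eu n → ℝ := fun y => ‖y - xh‖ ^ 2 with hw2
  have hw2C : ∀ y, ContDiffAt ℝ 2 w2 y := fun y => (sq_contDiff xh).contDiffAt
  have hgw2 : ∀ y, gradNorm n w2 y = 2 * ‖y - xh‖ := sq_gradNorm xh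
  have hφ1 : ∀ y, ContDiffAt ℝ 2 (fun y => f (w y)) y := fun y => hfC.contDiffAt.comp y (hwC y)
  have hφ2 : ∀ y, ContDiffAt ℝ 2 (fun y => g (w2 y)) y := fun y => hgC.contDiffAt.comp y (hw2C y)
  have hφle : ∀ y ∈ S, f (w y) - g (w2 y) ≤ a * ((1 - ‖y‖ ^ 2) - E * ‖y - xh‖ ^ 2 - δ) := by
    intro y hy
    simp only [hf, hg, hww, hw2]
    set D := 1 - ‖y‖ ^ 2 with hD
    have hD0 : 0 ≤ D := hδ0.le.trans hy.1.1
    have : (1 - m) * D + B * D ^ 2 ≤ D := by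
      have : B * D ≤ m := by rw [hm]; gcongr; exact hy.1.2
      linarith [mul_le_mul_of_nonneg_right this hD0]
    linarith [mul_le_mul_of_nonneg_left this ha]
  have key := abp hn hlam hLam (u := u) (φ := fun y => f (w y) - g (w2 y)) (b := b) (S := S)
    (Ω := Ω) (c := xh) (ρ := ρ) (G := 14 * a) (η := K' * ρ ^ (1 - n / q)) hSc hΩo hΩS hScb hρ
    (by positivity)
    (by positivity) (fun y hy => hS.uC y (hSB hy)) (fun y hy => (hφ1 y).sub (hφ2 y))
    (fun y hy => hS.b0 y (hSB (hΩS hy))) (fun y hy => hS.sup y (hSB (hΩS hy)))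
    (by
      intro y hy A hA
      rw [hess_sub (hφ1 y) (hφ2 y), hess_comp (hwC y) hfd (hf'd (w y)) hfC,
        hess_comp (hw2C y) hgd (hasDerivAt_const _ _) hgC]
      have e : hess n w y = (2:ℝ) • (1 : Matrix (Fin n) (Fin n) ℝ) := sq_hess 0 y
      have e2 : hess n w2 y = (2:ℝ) • (1 : Matrix (Fin n) (Fin n) ℝ) := sq_hess xh y
      rw [e, e2, smul_smul, smul_smul, zero_smul, zero_add, add_sub_assoc, ← sub_smul]
      have hD0 : 0 ≤ 1 - ‖y‖ ^ 2 := hδ0.le.trans hy.1.1.le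
      have hDr : 1 - ‖y‖ ^ 2 ≤ r := hy.1.2.le
      have h3 : f' (w y) * 2 - a * E * 2
          = -(a * (2 * ((1 - m) + 2 * B * (1 - ‖y‖ ^ 2) + E))) := by
        simp only [hf', hww]; ring
      rw [h3]
      have h1m : 0 ≤ 1 - m := by linarith
      refine le_trans ?_ (trace_comp_lower hA (by positivity) (by positivity))
      rw [hgw]
      have e3 : a * (2 * B) * lam * (2 * ‖y‖) ^ 2
          - a * (2 * (1 - m + 2 * B * (1 - ‖y‖ ^ 2) + E)) * (Lam * n)
          = a * (8 * B * lam * ‖y‖ ^ 2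
            - 2 * (1 - m + 2 * B * (1 - ‖y‖ ^ 2) + E) * (Lam * n)) := by ring
      rw [e3]
      apply mul_nonneg ha
      have a1 : 1 / 2 ≤ ‖y‖ ^ 2 := by linarith
      have a2 : 8 * B * lam * (1/2) ≤ 8 * B * lam * ‖y‖ ^ 2 := by gcongr
      have a3 : 2 * (1 - m + 2 * B * (1 - ‖y‖ ^ 2) + E) * (Lam * n) ≤
          2 * (1 + 2 * B * r + E) * (Lam * n) := by
        gcongr
        linarith
      have a4 : B * lam = Lam * n * (1 + E) := by rw [hB, hC1]; field_simp
      have a5 : B * (2 * Lam * n * r) ≤ B * lam := by gcongr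
      linarith)
    (by
      intro y hy
      have hd : fderiv ℝ (fun y => f (w y) - g (w2 y)) y
          = fderiv ℝ (fun y => f (w y)) y - fderiv ℝ (fun y => g (w2 y)) y :=
        fderiv_fun_sub ((hφ1 y).differentiableAt (by norm_num))
          ((hφ2 y).differentiableAt (by norm_num))
      have hn1 : gradNorm n (fun y => f (w y) - g (w2 y)) y ≤
          gradNorm n (fun y => f (w y)) y + gradNorm n (fun y => g (w2 y)) y := by
        unfold gradNorm
        rw [hd]; exact norm_sub_le _ _
      refine hn1.trans ?_
      rw [gradNorm_comp ((hwC y).differentiableAt (by norm_num)) (hfd (w y)), hgw,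
        gradNorm_comp ((hw2C y).differentiableAt (by norm_num)) (hgd (w2 y)), hgw2]
      have hD0 : 0 ≤ 1 - ‖y‖ ^ 2 := hδ0.le.trans hy.1.1.le
      have hDr : 1 - ‖y‖ ^ 2 ≤ r := hy.1.2.le
      have h1m : 0 ≤ 1 - m := by linarith
      have hy1 : ‖y‖ ≤ 1 := (lt_one_aux hδ0 hy.1.1.le).le
      simp only [hf', hww]
      rw [abs_neg, abs_of_nonneg (by positivity), abs_of_nonneg (by positivity)]
      have b1 : B * (1 - ‖y‖ ^ 2) ≤ m := by rw [hm]; gcongr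
      have b2 : E * ‖y - xh‖ ≤ 4 := le_trans (by gcongr; exact hy.2.le) hEρ
      have b3 : a * (1 - m + 2 * B * (1 - ‖y‖ ^ 2)) * (2 * ‖y‖) ≤ a * 2 * (2 * 1) := by
        gcongr
        linarith
      have b4 : a * (E * ‖y - xh‖) ≤ a * 4 := by gcongr
      linarith)
    (by
      intro y hy hyΩ
      refine (hφle y hy).trans ?_
      by_cases h5 : 1 - ‖y‖ ^ 2 = δ
      · refine le_trans ?_ (hS.u0 y (hSB hy))
        rw [h5]
        have : 0 ≤ E * ‖y - xh‖ ^ 2 := by positivity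
        exact mul_nonpos_of_nonneg_of_nonpos ha (by linarith)
      by_cases h6 : ‖y - xh‖ = ρ
      · refine le_trans ?_ (hS.u0 y (hSB hy))
        rw [h6, hEρ2]
        have := hy.1.2
        exact mul_nonpos_of_nonneg_of_nonpos ha (by linarith)
      · have h7 : 1 - ‖y‖ ^ 2 = r := by
          by_contra h7
          exact hyΩ ⟨⟨lt_of_le_of_ne hy.1.1 (Ne.symm h5), lt_of_le_of_ne hy.1.2 h7⟩,
            lt_of_le_of_ne hy.2 h6⟩
        refine le_trans ?_ (hH y h7.ge)
        have : 0 ≤ E * ‖y - xh‖ ^ 2 := by positivity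
        exact mul_le_mul_of_nonneg_left (by linarith) ha)
    (hb Ω xh ρ hρ.le hΩo.measurableSet (hΩS.trans hSB) (hΩS.trans hScb))
    (by
      calc _ = κ * ρ ^ (1 - n / q) := by rw [hκ]; ring
        _ ≤ κ * θ := by gcongr
        _ ≤ C * θ := by
          gcongr
          rw [hC]; linarith
        _ ≤ _ := hCθ)
  have hfin := key x ⟨⟨by linarith, hxr.le⟩, hxxh.trans hrρ⟩
  set D := 1 - ‖x‖ ^ 2 with hD
  have herr : 4 * ρ * (14 * a) * (K' * ρ ^ (1 - n / q) / (lam * om n)) ≤ 112 * κ * θ * D * a := by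
    calc 4 * ρ * (14 * a) * (K' * ρ ^ (1 - n / q) / (lam * om n))
        = 56 * a * κ * (ρ * ρ ^ (1 - n / q)) := by rw [hκ]; ring
      _ ≤ 56 * a * κ * (r * θ) := by gcongr
      _ ≤ 56 * a * κ * ((2 * D) * θ) := by gcongr; linarith
      _ = _ := by ring
  have hφx : a * (D * (1 - m) - 8 * θ * D - θ * D) ≤ f (w x) - g (w2 x) := by
    simp only [hf, hg, hww, hw2, ← hD]
    rw [mul_assoc a E, ← mul_sub]
    apply mul_le_mul_of_nonneg_left _ ha
    have c1 : E * ‖x - xh‖ ^ 2 ≤ 8 * θ * D := by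
      calc E * ‖x - xh‖ ^ 2 ≤ E * r ^ 2 := by gcongr
        _ = 4 * θ * r := by rw [← hEr]; ring
        _ ≤ 4 * θ * (2 * D) := by gcongr; linarith
        _ = _ := by ring
    have c2 : δ ≤ θ * D := by rw [hδ, mul_div_assoc]; gcongr
    have c3 : 0 ≤ B * D ^ 2 := by positivity
    linarith
  have hDpos : 0 < D := by linarith
  have hmD : a * (D * m) ≤ a * (D * (5 * C1 * θ)) := by gcongr
  have hCe : a * (1 - C * θ) * D = a * D - a * (D * (5 * C1 * θ)) - 9 * (a * (θ * D))
      - 112 * κ * θ * D * a := by rw [hC]; ring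
  rw [hCe]
  linarith


theorem hopf_step_aux {a x y X : ℝ} (ha : 0 ≤ a) (hx1 : x ≤ 1) (hyx : y ≤ x)
    (hX : X ≤ (x - y) / 2) (hx0 : 0 ≤ x) :
    a * (1 + y) / 2 ≤ a * (1 + x) / 2 * (1 - X) := by
  have h1 : (1 + x) / 2 * X ≤ (1 + x) / 2 * ((x - y) / 2) := by gcongr
  have h2 : (1 + x) / 2 * ((x - y) / 2) ≤ 1 * ((x - y) / 2) := by
    apply mul_le_mul_of_nonneg_right <;> linarith
  have h3 : a * ((1 + y) / 2) ≤ a * ((1 + x) / 2 - (1 + x) / 2 * X) := by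
    apply mul_le_mul_of_nonneg_left _ ha
    linarith
  linarith

theorem hopf {n : ℕ} (hn : 1 ≤ n) {lam Lam : ℝ} (hlam : 0 < lam) (hLam : lam ≤ Lam)
    {q K : ℝ} (hq : (n : ℝ) < q) (hK : 0 < K) :
    ∃ r0 : ℝ, 0 < r0 ∧ r0 ≤ 1 ∧ ∀ b u : Eu n → ℝ, Sup n lam Lam q K b u →
      ∀ a : ℝ, 0 ≤ a → (∀ x, r0 ≤ 1 - ‖x‖ ^ 2 → a * (1 - ‖x‖ ^ 2) ≤ u x) →
        ∀ x ∈ Metric.ball (0 : Eu n) 1, a / 2 * (1 - ‖x‖ ^ 2) ≤ u x := by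
  obtain ⟨K', hK', hb⟩ := holder_b hn hq hK
  have hn0 : (0:ℝ) < n := by exact_mod_cast hn
  have hq0 : 0 < q := hn0.trans hq
  set γ := 1 - (n:ℝ) / q with hγ
  have hγ0 : 0 < γ := by rw [hγ, sub_pos, div_lt_one hq0]; exact hq
  have hγ1 : γ < 1 := by rw [hγ]; linarith [div_pos hn0 hq0]
  have hom := om_pos n
  have hLam0 : 0 < Lam := hlam.trans_le hLam
  set C := 5 * (Lam * n / lam) + 9 + 112 * (K' / (lam * om n)) with hC
  have hC0 : 0 < C := by positivity
  set μ : ℝ := (1/2) ^ (γ / 2) with hμ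
  have hμ0 : 0 < μ := by positivity
  have hμ1 : μ < 1 := Real.rpow_lt_one (by norm_num) (by norm_num) (by positivity)
  obtain ⟨R1, hR1, hsm⟩ := small_rpow (γ := γ / 2) (C := C) (θ := (1 - μ) / 2) (by positivity) hC0
    (by linarith)
  set r0 := min (1/2) (min R1 (lam / (2 * Lam * n))) with hr0
  have hr0p : 0 < r0 := by
    rw [hr0]; apply lt_min (by norm_num); apply lt_min hR1; positivity
  have hr0h : r0 ≤ 1 / 2 := min_le_left _ _
  have hr0R : r0 ≤ R1 := (min_le_right _ _).trans (min_le_left _ _)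
  have hr0l : 2 * Lam * n * r0 ≤ lam := by
    have : r0 ≤ lam / (2 * Lam * n) := (min_le_right _ _).trans (min_le_right _ _)
    rw [le_div_iff₀ (by positivity)] at this
    linarith
  refine ⟨r0, hr0p, by linarith, ?_⟩
  intro b u hS a ha hH0
  have hb' := hb b hS.bc hS.b0 hS.bL
  have hθ : ∀ k : ℕ, (r0 * (1/2) ^ k) ^ (γ / 2) = r0 ^ (γ / 2) * μ ^ k := by
    intro k
    rw [Real.mul_rpow hr0p.le (by positivity), hμ, ← Real.rpow_natCast, ← Real.rpow_natCast,
      ← Real.rpow_mul (by norm_num), ← Real.rpow_mul (by norm_num), mul_comm (k:ℝ)]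
  have hCθ : C * r0 ^ (γ / 2) ≤ (1 - μ) / 2 := hsm r0 hr0p.le hr0R
  have hind : ∀ k : ℕ, ∀ x, r0 * (1/2) ^ k ≤ 1 - ‖x‖ ^ 2 →
      a * (1 + μ ^ k) / 2 * (1 - ‖x‖ ^ 2) ≤ u x := by
    intro k
    induction k with
    | zero =>
      intro x hx
      have := hH0 x (by simpa using hx)
      simpa [one_add_one_eq_two] using this
    | succ k ih =>
      set r := r0 * (1/2) ^ k with hr
      have hrp : 0 < r := by positivity
      have hpk : ((1:ℝ)/2) ^ k ≤ 1 := pow_le_one₀ (by norm_num) (by norm_num)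
      have hrr0 : r ≤ r0 := by
        rw [hr]; exact mul_le_of_le_one_right hr0p.le hpk
      have hr1 : r ≤ 1 := by linarith
      have hμk : μ ^ k ≤ 1 := pow_le_one₀ hμ0.le hμ1.le
      have hμk0 : 0 < μ ^ k := by positivity
      have hCk : C * r ^ (γ / 2) ≤ (μ ^ k - μ ^ (k + 1)) / 2 := by
        rw [hθ k, ← mul_assoc]
        calc _ ≤ (1 - μ) / 2 * μ ^ k := by gcongr
          _ = _ := by ring
      have hρe : r ^ (1 - γ / 4) * (r ^ (1 - γ / 4)) ^ γ = r ^ ((1 - γ / 4) * (1 + γ)) := by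
        rw [← Real.rpow_mul hrp.le, ← Real.rpow_add hrp]; congr 1; ring
      have hL := layer hn hlam hLam hK' hS hb' (r := r) (ρ := r ^ (1 - γ / 4))
        (θ := r ^ (γ / 2)) (a := a * (1 + μ ^ k) / 2) (C := C) (by positivity) hrp (by linarith)
        (le_trans (by gcongr) hr0l) (by positivity)
        (by
          rw [← Real.rpow_natCast, ← Real.rpow_mul hrp.le, ← Real.rpow_add hrp,
            ← Real.rpow_natCast]
          congr 1; push_cast; ring)
        (by
          conv_lhs => rw [← Real.rpow_one r]
          exact Real.rpow_le_rpow_of_exponent_ge hrp hr1 (by linarith))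
        (by positivity) (Real.rpow_le_one hrp.le hr1 (by positivity))
        (by
          conv_lhs => rw [← Real.rpow_one r]
          exact Real.rpow_le_rpow_of_exponent_ge hrp hr1 (by linarith))
        (by
          rw [hρe]
          have : r * r ^ (γ / 2) = r ^ (1 + γ / 2) := by
            rw [Real.rpow_add hrp, Real.rpow_one]
          rw [this]
          exact Real.rpow_le_rpow_of_exponent_ge hrp hr1 (by nlinarith))
        (by
          rw [← hγ, ← Real.rpow_mul hrp.le]
          exact Real.rpow_le_rpow_of_exponent_ge hrp hr1 (by nlinarith))
        hC (by
          have : 0 < μ ^ (k + 1) := by positivity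
          linarith) ih
      intro x hx
      have h2 : r / 2 ≤ 1 - ‖x‖ ^ 2 := by
        refine le_trans (le_of_eq ?_) hx
        rw [hr, pow_succ]; ring
      refine le_trans ?_ (hL x h2)
      have hD : 0 ≤ 1 - ‖x‖ ^ 2 := by linarith
      apply mul_le_mul_of_nonneg_right _ hD
      apply hopf_step_aux ha hμk _ hCk hμk0.le
      rw [pow_succ]; exact mul_le_of_le_one_right hμk0.le hμ1.le
  intro x hx
  rw [mem_ball_zero_iff] at hx
  have hD : 0 < 1 - ‖x‖ ^ 2 := by nlinarith [norm_nonneg x]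
  obtain ⟨k, hk⟩ := exists_pow_lt_of_lt_one (div_pos hD hr0p) (by norm_num : (1:ℝ)/2 < 1)
  rw [lt_div_iff₀ hr0p] at hk
  refine le_trans ?_ (hind k x (by linarith))
  apply mul_le_mul_of_nonneg_right _ hD.le
  have : 0 ≤ a * μ ^ k := by positivity
  linarith

theorem pow_near {A r : ℝ} (hA : 1 < A) (hr : 0 < r) (hr1 : r ≤ 1) :
    ∃ i : ℕ, 1 ≤ A ^ i * r ∧ A ^ i ≤ A / r := by
  obtain ⟨m, h1, h2⟩ := exists_nat_pow_near ((one_le_inv₀ hr).2 hr1) hA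
  refine ⟨m + 1, ?_, ?_⟩
  · calc (1:ℝ) = r⁻¹ * r := by field_simp
      _ ≤ _ := by gcongr
  · rw [pow_succ, div_eq_mul_inv, mul_comm]
    gcongr

theorem pow_loss {A c : ℝ} (hA : 1 < A) (hc : 0 < c) :
    ∃ N : ℕ, (1 / A) ^ N ≤ c := by
  obtain ⟨N, hN⟩ := exists_pow_lt_of_lt_one hc (by rw [div_lt_one (by linarith)]; exact hA : 1 / A < 1)
  exact ⟨N, hN.le⟩

/-- number of steps and loss are polynomially controlled -/
theorem pow_count {A c : ℝ} (hA : 1 < A) (hA2 : A ≤ 2) (hc : 0 < c) :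
    ∃ N : ℕ, ∀ r : ℝ, 0 < r → r ≤ 1 → ∃ i : ℕ, 1 ≤ A ^ i * r ∧ (r / 2) ^ N ≤ c ^ i := by
  obtain ⟨N, hN⟩ := pow_loss hA hc
  refine ⟨N, fun r hr hr1 => ?_⟩
  obtain ⟨i, h1, h2⟩ := pow_near hA hr hr1
  refine ⟨i, h1, ?_⟩
  have hA0 : 0 < A := by linarith
  have h3 : r / 2 ≤ (1 / A) ^ i := by
    rw [one_div_pow, div_le_div_iff₀ (by norm_num) (by positivity)]
    rw [le_div_iff₀ hr] at h2
    linarith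
  calc (r / 2) ^ N ≤ ((1 / A) ^ i) ^ N := by gcongr
    _ = ((1 / A) ^ N) ^ i := by rw [← pow_mul, ← pow_mul, mul_comm]
    _ ≤ c ^ i := by gcongr


theorem pow_mono_aux {c t : ℝ} (hc : 0 < c) (hc1 : c ≤ 1) (ht : 0 ≤ t) (j : ℕ) :
    c ^ j * t ≤ t := by
  have : c ^ j ≤ 1 := pow_le_one₀ hc.le hc1
  exact mul_le_of_le_one_left ht this

section chain
variable {n : ℕ} {u : Eu n → ℝ} {s c : ℝ}

theorem chain1 (hc : 0 < c) (hc1 : c ≤ 1)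
    (dbl : ∀ (z : Eu n) (ρ t : ℝ), ‖z‖ < 1 → 0 < ρ → ρ ≤ s * (1 - ‖z‖) → 0 ≤ t →
      (∀ x ∈ Metric.ball z ρ, t ≤ u x) → ∀ x ∈ Metric.ball z (2 * ρ), c * t ≤ u x) :
    ∀ (j : ℕ) (z : Eu n) (r t : ℝ), ‖z‖ < 1 → 0 < r → r ≤ s * (1 - ‖z‖) → 0 ≤ t →
      s * (1 - ‖z‖) ≤ 2 ^ j * r → (∀ x ∈ Metric.ball z r, t ≤ u x) →
      ∀ x ∈ Metric.ball z (s * (1 - ‖z‖)), c ^ j * t ≤ u x := by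
  intro j
  induction j with
  | zero =>
    intro z r t hz hr hrs ht hj hG x hx
    simp only [pow_zero, one_mul] at hj ⊢
    exact hG x (Metric.ball_subset_ball hj hx)
  | succ j ih =>
    intro z r t hz hr hrs ht hj hG x hx
    have h1 := dbl z r t hz hr hrs ht hG
    rw [pow_succ, mul_assoc]
    by_cases h2 : 2 * r ≤ s * (1 - ‖z‖)
    · refine ih z (2 * r) (c * t) hz (by linarith) h2 (by positivity) ?_ h1 x hx
      rw [pow_succ] at hj; linarith
    · push Not at h2
      refine le_trans (pow_mono_aux hc hc1 (by positivity) j) (h1 x ?_)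
      exact Metric.ball_subset_ball h2.le hx

theorem chain2 (hc : 0 < c) (hc1 : c ≤ 1) (hs : 0 < s) (hs8 : s ≤ 1 / 8)
    (dbl : ∀ (z : Eu n) (ρ t : ℝ), ‖z‖ < 1 → 0 < ρ → ρ ≤ s * (1 - ‖z‖) → 0 ≤ t →
      (∀ x ∈ Metric.ball z ρ, t ≤ u x) → ∀ x ∈ Metric.ball z (2 * ρ), c * t ≤ u x) :
    ∀ (j : ℕ) (z : Eu n) (t : ℝ), ‖z‖ < 1 → 0 ≤ t → 1 ≤ (1 + s / 2) ^ j * (1 - ‖z‖) →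
      (∀ x ∈ Metric.ball z (s * (1 - ‖z‖)), t ≤ u x) →
      ∀ x ∈ Metric.ball (0 : Eu n) s, c ^ j * t ≤ u x := by
  intro j
  induction j with
  | zero =>
    intro z t hz ht hj hG x hx
    simp only [pow_zero, one_mul] at hj ⊢
    have : ‖z‖ = 0 := le_antisymm (by linarith) (norm_nonneg _)
    have hz0 : z = 0 := norm_eq_zero.1 this
    subst hz0
    apply hG x; simpa using hx
  | succ j ih =>
    intro z t hz ht hj hG x hx
    set d := 1 - ‖z‖ with hd
    have hd0 : 0 < d := by linarith
    have h1 := dbl z (s * d) t hz (by positivity) le_rfl ht hG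
    rw [pow_succ, mul_assoc]
    have hsd : 0 < s * d := by positivity
    have hssd : s * (s * d) ≤ 1 / 8 * (s * d) := by gcongr
    by_cases h2 : ‖z‖ < s * d / 2
    · refine le_trans (pow_mono_aux hc hc1 (by positivity) j) (h1 x ?_)
      rw [Metric.mem_ball, dist_eq_norm] at hx ⊢
      rw [sub_zero] at hx
      have h3 : ‖x - z‖ ≤ ‖x‖ + ‖z‖ := norm_sub_le _ _
      have h4 : s * 1 ≤ s * (d + s * d / 2) := by gcongr; linarith
      linarith
    · push Not at h2
      have hzp : 0 < ‖z‖ := by linarith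
      set z' : Eu n := (1 - s * d / 2 / ‖z‖) • z with hz'
      have hratio : s * d / 2 / ‖z‖ ≤ 1 := by rw [div_le_one hzp]; exact h2
      have hz'n : ‖z'‖ = ‖z‖ - s * d / 2 := by
        rw [hz', norm_smul, Real.norm_eq_abs, abs_of_nonneg (by linarith)]
        field_simp
      have hd' : 1 - ‖z'‖ = (1 + s / 2) * d := by rw [hz'n, hd]; ring
      have hzz' : ‖z' - z‖ = s * d / 2 := by
        have e : z' - z = (-(s * d / 2 / ‖z‖)) • z := by rw [hz', sub_smul, neg_smul]; simp
        rw [e, norm_smul, norm_neg, Real.norm_eq_abs, abs_of_nonneg (by positivity)]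
        field_simp
      refine ih z' (c * t) (by linarith) (by positivity) ?_ ?_ x hx
      · rw [hd', ← mul_assoc, ← pow_succ]; exact hj
      · intro y hy
        apply h1 y
        rw [Metric.mem_ball, dist_eq_norm] at hy ⊢
        rw [hd'] at hy
        have h3 : ‖y - z‖ ≤ ‖y - z'‖ + ‖z' - z‖ := by
          simpa using norm_add_le (y - z') (z' - z)
        have e : s * ((1 + s / 2) * d) = s * d + s * (s * d) / 2 := by ring
        linarith

theorem chain3 {r1 : ℝ} (hs : 0 < s) (hr1 : 0 < r1) (hc : 0 < c)
    (dbl : ∀ (z : Eu n) (ρ t : ℝ), ‖z‖ < 1 → 0 < ρ → ρ ≤ s * (1 - ‖z‖) → 0 ≤ t →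
      (∀ x ∈ Metric.ball z ρ, t ≤ u x) → ∀ x ∈ Metric.ball z (2 * ρ), c * t ≤ u x) :
    ∀ (j : ℕ) (z : Eu n) (t : ℝ), ‖z‖ ≤ j * (s * r1) → ‖z‖ ≤ 1 - r1 → 0 ≤ t →
      (∀ x ∈ Metric.ball (0 : Eu n) (s * r1), t ≤ u x) →
      ∀ x ∈ Metric.ball z (s * r1), c ^ j * t ≤ u x := by
  intro j
  induction j with
  | zero =>
    intro z t hz hz1 ht hG x hx
    simp only [Nat.cast_zero, zero_mul, norm_le_zero_iff] at hz
    subst hz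
    simpa using hG x hx
  | succ j ih =>
    intro z t hz hz1 ht hG x hx
    have hj0 : (0:ℝ) ≤ j := Nat.cast_nonneg j
    set z' : Eu n := ((j:ℝ) / (j + 1)) • z with hz'
    have hf1 : (j:ℝ) / (j + 1) ≤ 1 := by rw [div_le_one (by positivity)]; linarith
    have hn : ‖z'‖ = (j:ℝ) / (j + 1) * ‖z‖ := by
      rw [hz', norm_smul, Real.norm_eq_abs, abs_of_nonneg (by positivity)]
    push_cast at hz
    have h1 : ‖z'‖ ≤ j * (s * r1) := by
      rw [hn]
      calc (j:ℝ) / (j + 1) * ‖z‖ ≤ (j:ℝ) / (j + 1) * ((j + 1) * (s * r1)) := by gcongr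
        _ = _ := by field_simp
    have h2 : ‖z'‖ ≤ 1 - r1 := by
      rw [hn]
      exact (mul_le_of_le_one_left (norm_nonneg _) hf1).trans hz1
    have h3 : ‖z - z'‖ ≤ s * r1 := by
      have e : z - z' = ((1:ℝ) / (j + 1)) • z := by
        rw [hz']
        nth_rw 1 [← one_smul ℝ z]
        rw [← sub_smul]; congr 1; field_simp; ring
      rw [e, norm_smul, Real.norm_eq_abs, abs_of_nonneg (by positivity)]
      calc (1:ℝ) / (j + 1) * ‖z‖ ≤ (1:ℝ) / (j + 1) * ((j + 1) * (s * r1)) := by gcongr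
        _ = _ := by field_simp
    have h4 := ih z' t h1 h2 ht hG
    have h5 := dbl z' (s * r1) (c ^ j * t) (by linarith) (by positivity)
      (by gcongr; linarith) (by positivity) h4
    have e : c ^ (j + 1) * t = c * (c ^ j * t) := by rw [pow_succ]; ring
    rw [e]
    apply h5
    rw [Metric.mem_ball, dist_eq_norm] at hx ⊢
    have h6 : ‖x - z'‖ ≤ ‖x - z‖ + ‖z - z'‖ := by simpa using norm_add_le (x - z) (z - z')
    linarith

end chain

theorem propagate {n : ℕ} (hn : 1 ≤ n) {lam Lam : ℝ} (hlam : 0 < lam) (hLam : lam ≤ Lam)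
    {q K : ℝ} (hq : (n : ℝ) < q) (hK : 0 < K) :
    ∃ (c s : ℝ) (N : ℕ), 0 < c ∧ 0 < s ∧ s ≤ 1 / 8 ∧
      ∀ b u : Eu n → ℝ, Sup n lam Lam q K b u →
      ∀ (x : Eu n) (r t : ℝ), ‖x‖ < 1 → 0 < r → r ≤ s * (1 - ‖x‖) → 0 ≤ t →
        (∀ y ∈ Metric.ball x r, t ≤ u y) →
        ∀ z ∈ Metric.ball (0 : Eu n) 1, c * r ^ N * t * (1 - ‖z‖) ≤ u z := by
  obtain ⟨R0, c, hR0, hc, hc1, hdb⟩ := doubling hn hlam hLam hq hK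
  obtain ⟨r0, hr0, hr01, hhopf⟩ := hopf hn hlam hLam hq hK
  set s := min (1/8) (R0 / 4) with hs
  have hs0 : 0 < s := by rw [hs]; apply lt_min (by norm_num); positivity
  have hs8 : s ≤ 1 / 8 := min_le_left _ _
  have hsR : s ≤ R0 / 4 := min_le_right _ _
  obtain ⟨N1, hN1⟩ := pow_count (A := 2) (c := c) (by norm_num) le_rfl hc
  obtain ⟨N2, hN2⟩ := pow_count (A := 1 + s / 2) (c := c) (by linarith) (by linarith) hc
  set r1 := r0 / 2 with hr1
  have hr10 : 0 < r1 := by positivity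
  obtain ⟨J, hJ⟩ := exists_nat_ge (1 / (s * r1))
  have hJ' : 1 ≤ J * (s * r1) := by rwa [div_le_iff₀ (by positivity)] at hJ
  refine ⟨(1/2) ^ N1 * (1/2) ^ N2 * c ^ J / 2, s, N1 + N2, by positivity, hs0, hs8, ?_⟩
  intro b u hS x r t hx hr hrs ht hG z hz
  have dbl : ∀ (z : Eu n) (ρ t : ℝ), ‖z‖ < 1 → 0 < ρ → ρ ≤ s * (1 - ‖z‖) → 0 ≤ t →
      (∀ x ∈ Metric.ball z ρ, t ≤ u x) → ∀ x ∈ Metric.ball z (2 * ρ), c * t ≤ u x := by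
    intro z ρ t hz hρ hρs ht hG
    have hd : 0 < 1 - ‖z‖ := by linarith
    have hd1 : 1 - ‖z‖ ≤ 1 := by linarith [norm_nonneg z]
    have h1 : s * (1 - ‖z‖) ≤ 1 / 8 * (1 - ‖z‖) := by gcongr
    have h2 : s * (1 - ‖z‖) ≤ s * 1 := by gcongr
    have := hdb b u hS z (4 * ρ) t (by positivity) (by linarith) (by linarith) ht
      (by rw [mul_div_cancel_left₀ _ (by norm_num)]; exact hG)
    rw [show 4 * ρ / 2 = 2 * ρ by ring] at this
    exact this
  set d := 1 - ‖x‖ with hd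
  have hd0 : 0 < d := by linarith
  have hd1 : d ≤ 1 := by linarith [norm_nonneg x]
  have hrd : r ≤ d := hrs.trans (mul_le_of_le_one_left hd0.le (by linarith))
  obtain ⟨i, hi1, hi2⟩ := hN1 r hr (by linarith)
  obtain ⟨j, hj1, hj2⟩ := hN2 d hd0 hd1
  have hsd1 : s * d ≤ 1 := by
    calc s * d ≤ 1 * 1 := by gcongr; linarith
      _ = 1 := by norm_num
  have g1 := chain1 hc hc1 dbl i x r t hx hr hrs ht (by linarith) hG
  have g2 := chain2 hc hc1 hs0 hs8 dbl j x (c ^ i * t) hx (by positivity) hj1 g1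
  have hsr1 : s * r1 ≤ s := mul_le_of_le_one_right hs0.le (by linarith)
  set T := c ^ j * (c ^ i * t) with hT
  have hT0 : 0 ≤ T := by positivity
  have g3 : ∀ w : Eu n, ‖w‖ ≤ 1 - r1 → c ^ J * T ≤ u w := by
    intro w hw
    exact chain3 hs0 hr10 hc dbl J w T (by linarith) hw hT0
      (fun y hy => g2 y (Metric.ball_subset_ball hsr1 hy)) w
      (Metric.mem_ball_self (by positivity))
  have g4 := hhopf b u hS (c ^ J * T) (by positivity) (by
    intro w hw
    have hw1 : ‖w‖ < 1 := lt_one_aux hr0 hw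
    have hw2 : ‖w‖ ≤ 1 - r1 := by
      rw [hr1]; nlinarith [norm_nonneg w]
    have := g3 w hw2
    have h0 : 0 ≤ c ^ J * T := by positivity
    nlinarith [sq_nonneg ‖w‖]) z hz
  rw [mem_ball_zero_iff] at hz
  refine le_trans ?_ g4
  have hzz := one_sub_aux (norm_nonneg z) hz.le
  have e1 : (r / 2) ^ N2 ≤ c ^ j := le_trans (by gcongr) hj2
  have e2 : (1/2) ^ N1 * (1/2) ^ N2 * r ^ (N1 + N2) * t ≤ T := by
    calc (1/2) ^ N1 * (1/2) ^ N2 * r ^ (N1 + N2) * t = (r / 2) ^ N2 * ((r / 2) ^ N1 * t) := by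
          rw [pow_add, div_pow, div_pow, div_pow, div_pow]; ring
      _ ≤ c ^ j * (c ^ i * t) := by gcongr
  have hz0 : 0 ≤ 1 - ‖z‖ := by linarith
  calc (1/2) ^ N1 * (1/2) ^ N2 * c ^ J / 2 * r ^ (N1 + N2) * t * (1 - ‖z‖)
      = c ^ J / 2 * ((1/2) ^ N1 * (1/2) ^ N2 * r ^ (N1 + N2) * t) * (1 - ‖z‖) := by ring
    _ ≤ c ^ J / 2 * T * (1 - ‖z‖) := by gcongr
    _ ≤ c ^ J / 2 * T * (1 - ‖z‖ ^ 2) := by gcongr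
    _ = _ := by ring


theorem vol_antilip {n : ℕ} (hn : 1 ≤ n) {κ : ℝ} (hκ : 0 < κ) (Z : Set (Eu n)) (f : Eu n → Eu n)
    (h : ∀ z₁ ∈ Z, ∀ z₂ ∈ Z, κ * ‖z₁ - z₂‖ ≤ ‖f z₁ - f z₂‖) :
    volume Z ≤ ENNReal.ofReal (κ⁻¹ ^ n) * volume (f '' Z) := by
  have hinj : Set.InjOn f Z := by
    intro x hx y hy hxy
    have := h x hx y hy
    rw [hxy, sub_self, norm_zero] at this
    have h2 : ‖x - y‖ ≤ 0 := by
      by_contra hh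
      push Not at hh
      have := mul_pos hκ hh
      linarith
    exact sub_eq_zero.1 (norm_le_zero_iff.1 h2)
  have : Nonempty (Eu n) := ⟨0⟩
  set g := Function.invFunOn f Z with hg
  have hgf : ∀ z ∈ Z, g (f z) = z := fun z hz => hinj.leftInvOn_invFunOn hz
  have hlip : LipschitzOnWith (Real.toNNReal κ⁻¹) g (f '' Z) := by
    apply LipschitzOnWith.of_dist_le_mul
    rintro _ ⟨x, hx, rfl⟩ _ ⟨y, hy, rfl⟩
    rw [hgf x hx, hgf y hy, dist_eq_norm, dist_eq_norm, Real.coe_toNNReal _ (by positivity)]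
    have := h x hx y hy
    rw [inv_mul_eq_div, le_div_iff₀ hκ, mul_comm]; exact this
  have himg : g '' (f '' Z) = Z := by
    rw [Set.image_image]
    ext x; constructor
    · rintro ⟨y, hy, rfl⟩; simpa [hgf y hy] using hy
    · intro hx; exact ⟨x, hx, hgf x hx⟩
  have h1 := hlip.hausdorffMeasure_image_le (d := (n:ℝ)) (by positivity)
  rw [himg] at h1
  have hH : (volume : Measure (Eu n)) =
      (volume : Measure (Eu n)).addHaarScalarFactor (μH[(n:ℝ)] : Measure (Eu n)) •
        (μH[(n:ℝ)] : Measure (Eu n)) := by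
    have hf : (Module.finrank ℝ (Eu n)) = n := by simp
    have : (μH[(n:ℝ)] : Measure (Eu n)).IsAddHaarMeasure := by
      have := MeasureTheory.isAddHaarMeasure_hausdorffMeasure (E := Eu n)
      rwa [hf] at this
    exact Measure.isAddLeftInvariant_eq_smul _ _
  rw [hH, Measure.smul_apply, Measure.smul_apply]
  simp only [ENNReal.smul_def, smul_eq_mul]
  rw [mul_left_comm]
  gcongr
  refine h1.trans (le_of_eq ?_)
  congr 1
  rw [ENNReal.rpow_natCast, ENNReal.ofReal_pow (by positivity)]
  rfl

theorem opt_slope {n : ℕ} {R : ℝ} {φ : Eu n → ℝ} {z : Eu n}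
    (hφ : ContinuousOn φ (Metric.closedBall 0 R)) (hz : ‖z‖ < R) :
    ∃ (c : ℝ) (P : Eu n), (∀ ζ ∈ Metric.closedBall (0 : Eu n) R, c + inner ℝ P (ζ - z) ≤ φ ζ) ∧
      ∀ (c' : ℝ) (P' : Eu n),
        (∀ ζ ∈ Metric.closedBall (0 : Eu n) R, c' + inner ℝ P' (ζ - z) ≤ φ ζ) → c' ≤ c := by
  have hS : IsCompact (Metric.closedBall (0 : Eu n) R) := isCompact_closedBall _ _
  have hzS : z ∈ Metric.closedBall (0 : Eu n) R := by simpa using hz.le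
  obtain ⟨x0, hx0, hm⟩ := hS.exists_isMinOn ⟨z, hzS⟩ hφ
  obtain ⟨x1, hx1, hM⟩ := hS.exists_isMaxOn ⟨z, hzS⟩ hφ
  have hm' : ∀ ζ ∈ Metric.closedBall (0 : Eu n) R, φ x0 ≤ φ ζ := fun ζ hζ => hm hζ
  have hM' : ∀ ζ ∈ Metric.closedBall (0 : Eu n) R, φ ζ ≤ φ x1 := fun ζ hζ => hM hζ
  set r := R - ‖z‖ with hr
  have hr0 : 0 < r := by rw [hr]; linarith
  set T : Set (ℝ × Eu n) := {t | φ x0 ≤ t.1 ∧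
    ∀ ζ ∈ Metric.closedBall (0 : Eu n) R, t.1 + inner ℝ t.2 (ζ - z) ≤ φ ζ} with hT
  have hTc : IsClosed T := by
    rw [hT]
    have e : {t : ℝ × Eu n | φ x0 ≤ t.1 ∧
        ∀ ζ ∈ Metric.closedBall (0 : Eu n) R, t.1 + inner ℝ t.2 (ζ - z) ≤ φ ζ} =
        {t : ℝ × Eu n | φ x0 ≤ t.1} ∩ ⋂ ζ ∈ Metric.closedBall (0 : Eu n) R,
          {t : ℝ × Eu n | t.1 + inner ℝ t.2 (ζ - z) ≤ φ ζ} := by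
      ext t; simp
    rw [e]
    refine (isClosed_le (by fun_prop) (by fun_prop)).inter (isClosed_biInter fun ζ _ => ?_)
    exact isClosed_le (by fun_prop) (by fun_prop)
  have hsub : T ⊆ Set.Icc (φ x0) (φ z) ×ˢ Metric.closedBall (0 : Eu n) ((φ x1 - φ x0) / r) := by
    rintro ⟨c, P⟩ ⟨h1, h2⟩
    simp only at h1 h2
    refine ⟨⟨h1, by simpa using h2 z hzS⟩, ?_⟩
    simp only [Metric.mem_closedBall, dist_zero_right]
    by_cases hP : P = 0
    · rw [hP, norm_zero]
      have := hm' x1 hx1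
      exact div_nonneg (by linarith) hr0.le
    have hPn : 0 < ‖P‖ := norm_pos_iff.2 hP
    have hζ : z + (r / ‖P‖) • P ∈ Metric.closedBall (0 : Eu n) R := by
      simp only [Metric.mem_closedBall, dist_zero_right]
      refine (norm_add_le _ _).trans ?_
      rw [norm_smul, Real.norm_of_nonneg (by positivity), div_mul_cancel₀ _ hPn.ne', hr]
      linarith
    have h3 := h2 _ hζ
    rw [add_sub_cancel_left, inner_smul_right, real_inner_self_eq_norm_sq] at h3
    have h4 : r / ‖P‖ * ‖P‖ ^ 2 = r * ‖P‖ := by field_simp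
    have h5 := hM' _ hζ
    rw [le_div_iff₀ hr0]
    linarith
  have hTk : IsCompact T := (isCompact_Icc.prod (isCompact_closedBall _ _)).of_isClosed_subset hTc hsub
  have hTn : (φ x0, (0 : Eu n)) ∈ T := ⟨le_rfl, fun ζ hζ => by simpa using hm' ζ hζ⟩
  obtain ⟨⟨c, P⟩, hcP, hmax⟩ := hTk.exists_isMaxOn ⟨_, hTn⟩ continuous_fst.continuousOn
  refine ⟨c, P, hcP.2, fun c' P' h' => ?_⟩
  by_cases hc : φ x0 ≤ c'
  · exact hmax (show (c', P') ∈ T from ⟨hc, h'⟩)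
  · push Not at hc
    exact hc.le.trans hcP.1


/-- points where a paraboloid of opening `a` touches from below in the closed ball -/
def Ct (n : ℕ) (v : Eu n → ℝ) (R a : ℝ) : Set (Eu n) :=
  {x | x ∈ Metric.ball (0 : Eu n) R ∧ ∀ ζ : Metric.closedBall (0 : Eu n) R,
    0 ≤ v ζ.1 - v x - fderiv ℝ v x (ζ.1 - x) + a / 2 * ‖ζ.1 - x‖ ^ 2}

theorem Ct_meas {n : ℕ} {v : Eu n → ℝ} {R a : ℝ}
    (hv : ∀ x ∈ Metric.ball (0 : Eu n) R, ContDiffAt ℝ 2 v x) : MeasurableSet (Ct n v R a) := by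
  refine meas_contact Metric.isOpen_ball
    (fun (ζ : Metric.closedBall (0 : Eu n) R) x =>
      v ζ.1 - v x - fderiv ℝ v x (ζ.1 - x) + a / 2 * ‖ζ.1 - x‖ ^ 2) fun ζ => ?_
  have h1 := fderiv_contOn hv
  have h2 := contOn_of hv
  exact ((continuousOn_const.sub h2).sub (h1.clm_apply (continuousOn_const.sub continuousOn_id))).add
    (Continuous.continuousOn (by fun_prop))

theorem Ct_mono {n : ℕ} {v : Eu n → ℝ} {R a a' : ℝ} (h : a ≤ a') : Ct n v R a ⊆ Ct n v R a' := by
  rintro x ⟨hx, hc⟩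
  refine ⟨hx, fun ζ => (hc ζ).trans ?_⟩
  have := mul_le_mul_of_nonneg_right h (sq_nonneg ‖ζ.1 - x‖)
  linarith

theorem nsq_expand {n : ℕ} (x y z : Eu n) :
    ‖y - z‖ ^ 2 = ‖x - z‖ ^ 2 + 2 * inner ℝ (x - z) (y - x) + ‖y - x‖ ^ 2 := by
  have : y - z = (x - z) + (y - x) := by abel
  rw [this, norm_add_sq_real]

theorem nsq_expand0 {n : ℕ} (x y : Eu n) :
    ‖y‖ ^ 2 = ‖x‖ ^ 2 + 2 * inner ℝ x (y - x) + ‖y - x‖ ^ 2 := by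
  have := nsq_expand x y 0
  simpa only [sub_zero] using this

theorem contact_pt {n : ℕ} {v : Eu n → ℝ} {R σ : ℝ} (hR1 : R < 1) (hσ : 0 < σ)
    (hv : ∀ x ∈ Metric.ball (0 : Eu n) 1, ContDiffAt ℝ 2 v x)
    (hv0 : ∀ x ∈ Metric.ball (0 : Eu n) 1, 0 ≤ v x)
    (hv1 : ∀ x ∈ Metric.ball (0 : Eu n) 1, v x ≤ 1)
    {z P : Eu n} {c : ℝ} (hz : ‖z‖ + 1 / σ < R) (hzA : z ∉ Ct n v R (σ ^ 2))
    (h1 : ∀ ζ ∈ Metric.closedBall (0 : Eu n) R,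
      c + inner ℝ P (ζ - z) ≤ v ζ + σ ^ 2 / 2 * ‖ζ‖ ^ 2)
    (h2 : ∀ (c' : ℝ) (P' : Eu n), (∀ ζ ∈ Metric.closedBall (0 : Eu n) R,
      c' + inner ℝ P' (ζ - z) ≤ v ζ + σ ^ 2 / 2 * ‖ζ‖ ^ 2) → c' ≤ c) :
    ∃ x, x ∈ Ct n v R (4 * σ ^ 2) ∧ x ∉ Ct n v R (σ ^ 2) ∧ ‖x - z‖ ≤ 1 / σ ∧
      grd n (fun y => v y + 2 * σ ^ 2 * ‖y‖ ^ 2) x = P + (3 * σ ^ 2) • z := by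
  have hS : IsCompact (Metric.closedBall (0 : Eu n) R) := isCompact_closedBall _ _
  have hSB : Metric.closedBall (0 : Eu n) R ⊆ Metric.ball 0 1 :=
    Metric.closedBall_subset_ball hR1
  have hσi : 0 < 1 / σ := by positivity
  have hzS : z ∈ Metric.closedBall (0 : Eu n) R := by
    simp only [Metric.mem_closedBall, dist_zero_right]; linarith
  have hvc : ContinuousOn v (Metric.closedBall (0 : Eu n) R) :=
    (contOn_of hv).mono hSB
  set a := σ ^ 2 with ha
  have ha0 : 0 < a := by positivity
  set ψ : Eu n → ℝ := fun ζ => v ζ + a / 2 * ‖ζ‖ ^ 2 - inner ℝ P (ζ - z) + 3 * a / 2 * ‖ζ - z‖ ^ 2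
    with hψ
  have hψc : ContinuousOn ψ (Metric.closedBall (0 : Eu n) R) :=
    ((hvc.add (Continuous.continuousOn (by fun_prop))).sub
      (Continuous.continuousOn (by fun_prop))).add (Continuous.continuousOn (by fun_prop))
  obtain ⟨x, hxS, hmin⟩ := hS.exists_isMinOn ⟨z, hzS⟩ hψc
  have hmin' : ∀ ζ ∈ Metric.closedBall (0 : Eu n) R, ψ x ≤ ψ ζ := fun ζ hζ => hmin hζ
  have hcz : a / 2 * ‖z‖ ^ 2 ≤ c := by
    refine h2 _ (a • z) fun ζ hζ => ?_
    rw [inner_smul_left, nsq_expand0 z ζ]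
    have := hv0 ζ (hSB hζ)
    have h3 := mul_nonneg ha0.le (sq_nonneg ‖ζ - z‖)
    simp only [conj_trivial]
    linarith
  have hxz : ‖x - z‖ ≤ 1 / σ := by
    have e1 := hmin' z hzS
    simp only [hψ, sub_self, norm_zero, inner_zero_right] at e1
    have e2 := h1 x hxS
    have e3 := hv1 z (hSB hzS)
    have e4 : 3 * a / 2 * ‖x - z‖ ^ 2 ≤ 1 := by linarith
    have e5 : (σ * ‖x - z‖) ^ 2 ≤ 1 := by
      rw [mul_pow, ← ha]
      have := mul_nonneg ha0.le (sq_nonneg ‖x - z‖)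
      linarith
    have e6 : σ * ‖x - z‖ ≤ 1 := by
      have h0 : 0 ≤ σ * ‖x - z‖ := by positivity
      exact (sq_le_one_iff₀ h0).1 e5
    rw [le_div_iff₀ hσ, mul_comm]; exact e6
  have hxR : ‖x‖ < R := by
    have : ‖x‖ ≤ ‖z‖ + ‖x - z‖ := by
      have := norm_add_le z (x - z)
      simpa using this
    linarith
  have hxB : x ∈ Metric.ball (0 : Eu n) R := by simpa using hxR
  have hvd : HasFDerivAt v (fderiv ℝ v x) x :=
    ((hv x (hSB hxS)).differentiableAt (by norm_num)).hasFDerivAt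
  have hsq0 : HasFDerivAt (fun y : Eu n => ‖y‖ ^ 2) ((2:ℝ) • innerSL ℝ x) x := by
    have := sq_hasFDerivAt (0 : Eu n) x
    simpa only [sub_zero] using this
  have hD : ∀ h : Eu n, fderiv ℝ v x h = inner ℝ P h - a * inner ℝ x h
      - 3 * a * inner ℝ (x - z) h := by
    have hin : HasFDerivAt (fun y : Eu n => inner ℝ P (y - z)) (innerSL ℝ P) x := by
      have := ((innerSL ℝ P).hasFDerivAt (x := x - z)).comp x ((hasFDerivAt_id x).sub_const z)
      simpa [Function.comp_def] using this
    have hψd := ((hvd.add (hsq0.const_mul (a / 2))).sub hin).add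
      ((sq_hasFDerivAt z x).const_mul (3 * a / 2))
    have hloc : IsLocalMin ψ x := by
      filter_upwards [Metric.isOpen_ball.mem_nhds hxB] with ζ hζ
      exact hmin' ζ (Metric.ball_subset_closedBall hζ)
    have h0 := hloc.hasFDerivAt_eq_zero hψd
    intro h
    have := congrArg (fun L : Eu n →L[ℝ] ℝ => L h) h0
    simp only [ContinuousLinearMap.add_apply, ContinuousLinearMap.sub_apply,
      ContinuousLinearMap.smul_apply, ContinuousLinearMap.zero_apply, smul_eq_mul,
      innerSL_apply_apply] at this
    linarith
  refine ⟨x, ⟨hxB, ?_⟩, ?_, hxz, ?_⟩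
  · rintro ⟨ζ, hζ⟩
    have e := hmin' ζ hζ
    simp only [hψ] at e
    rw [nsq_expand0 x ζ, nsq_expand x ζ z] at e
    have e3 : inner ℝ P (ζ - z) = inner ℝ P (ζ - x) + inner ℝ P (x - z) := by
      rw [← inner_add_right]; congr 1; abel
    rw [e3] at e
    simp only [hD]
    linarith
  · rintro ⟨_, hcx⟩
    have hle : v x + a / 2 * ‖x‖ ^ 2 + inner ℝ (P - (3 * a) • (x - z)) (z - x) ≤ c := by
      refine h2 _ (P - (3 * a) • (x - z)) fun ζ hζ => ?_
      have e := hcx ⟨ζ, hζ⟩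
      simp only [hD] at e
      rw [add_assoc, ← inner_add_right, nsq_expand0 x ζ]
      have : z - x + (ζ - z) = ζ - x := by abel
      rw [this, inner_sub_left, inner_smul_left]
      simp only [conj_trivial]
      linarith
    have e2 := h1 x hxS
    have e3 : inner ℝ (P - (3 * a) • (x - z)) (z - x) =
        - inner ℝ P (x - z) + 3 * a * ‖x - z‖ ^ 2 := by
      have : z - x = -(x - z) := by abel
      rw [this, inner_neg_right, inner_sub_left, inner_smul_left, real_inner_self_eq_norm_sq]
      simp only [conj_trivial]
      ring
    rw [e3] at hle
    have e4 : a * ‖x - z‖ ^ 2 ≤ 0 := by linarith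
    have e5 : ‖x - z‖ ^ 2 ≤ 0 := by
      by_contra hh
      push Not at hh
      have := mul_pos ha0 hh
      linarith
    have e6 : x = z := by
      have : ‖x - z‖ = 0 := by
        have := le_antisymm e5 (sq_nonneg _)
        exact pow_eq_zero_iff (two_ne_zero) |>.1 this
      exact sub_eq_zero.1 (norm_eq_zero.1 this)
    subst e6
    exact hzA ⟨hxB, hcx⟩
  · refine ext_inner_right ℝ fun h => ?_
    rw [← grd_inner]
    have := (hvd.add (hsq0.const_mul (2 * a))).fderiv
    have e : fderiv ℝ (fun y => v y + 2 * a * ‖y‖ ^ 2) x =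
      fderiv ℝ v x + (2 * a) • (2:ℝ) • innerSL ℝ x := this
    rw [e]
    simp only [ContinuousLinearMap.add_apply, ContinuousLinearMap.smul_apply, smul_eq_mul,
      innerSL_apply_apply, hD, inner_add_left, inner_smul_left, inner_sub_left, conj_trivial]
    ring


theorem cm_hess {n : ℕ} (c : ℝ) (x : Eu n) :
    hess n (fun y : Eu n => c * ‖y‖ ^ 2) x = (2 * c) • (1 : Matrix (Fin n) (Fin n) ℝ) := by
  have h := hess_comp (n := n) (w := fun y : Eu n => ‖y - 0‖ ^ 2) (x := x) (f := fun s => c * s)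
    (f' := fun _ => c) (f'' := 0) (sq_contDiff 0).contDiffAt
    (fun s => by simpa using (hasDerivAt_id s).const_mul c) (hasDerivAt_const _ _) (by fun_prop)
  rw [sq_hess] at h
  simp only [sub_zero, zero_smul, zero_add] at h
  rw [h, smul_smul, mul_comm]

theorem cm_contDiff {n : ℕ} (c : ℝ) : ContDiff ℝ 2 (fun y : Eu n => c * ‖y‖ ^ 2) := by
  have := (sq_contDiff (0 : Eu n))
  simp only [sub_zero] at this
  exact contDiff_const.mul this

theorem cm_fderiv {n : ℕ} {v : Eu n → ℝ} (c : ℝ) {x : Eu n} (hv : DifferentiableAt ℝ v x) (h : Eu n) :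
    fderiv ℝ (fun y : Eu n => v y + c * ‖y‖ ^ 2) x h = fderiv ℝ v x h + 2 * c * inner ℝ x h := by
  have hsq0 : HasFDerivAt (fun y : Eu n => ‖y‖ ^ 2) ((2:ℝ) • innerSL ℝ x) x := by
    have := sq_hasFDerivAt (0 : Eu n) x
    simpa only [sub_zero] using this
  have e : fderiv ℝ (fun y => v y + c * ‖y‖ ^ 2) x = fderiv ℝ v x + c • (2:ℝ) • innerSL ℝ x :=
    (hv.hasFDerivAt.add (hsq0.const_mul c)).fderiv
  rw [e]
  simp only [ContinuousLinearMap.add_apply, ContinuousLinearMap.smul_apply, smul_eq_mul,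
      innerSL_apply_apply]
  ring

theorem ct_psd {n : ℕ} {v : Eu n → ℝ} {R a : ℝ} {x : Eu n} (hv : ContDiffAt ℝ 2 v x)
    (hx : x ∈ Ct n v R a) : (hess n v x + a • (1 : Matrix (Fin n) (Fin n) ℝ)).PosSemidef := by
  have hd : DifferentiableAt ℝ v x := hv.differentiableAt (by norm_num)
  have hw : ContDiffAt ℝ 2 (fun y => v y + a / 2 * ‖y‖ ^ 2) x :=
    hv.add (cm_contDiff (a / 2)).contDiffAt
  have h := hess_psd (n := n) (w := fun y => v y + a / 2 * ‖y‖ ^ 2) (x := x) hw ?_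
  · rw [hess_add hv (cm_contDiff (a / 2)).contDiffAt, cm_hess] at h
    rwa [show 2 * (a / 2) = a by ring] at h
  · filter_upwards [Metric.isOpen_ball.mem_nhds hx.1] with z hz
    have := hx.2 ⟨z, Metric.ball_subset_closedBall hz⟩
    rw [cm_fderiv _ hd, nsq_expand0 x z]
    simp only at this
    linarith

theorem ct_grad {n : ℕ} {v : Eu n → ℝ} {R τ : ℝ} {x : Eu n} (hR1 : R < 1) (hτ : 0 < τ)
    (hv0 : ∀ x ∈ Metric.ball (0 : Eu n) 1, 0 ≤ v x)
    (hv1 : ∀ x ∈ Metric.ball (0 : Eu n) 1, v x ≤ 1)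
    (hx : x ∈ Ct n v R (τ ^ 2)) (hxR : ‖x‖ + 1 / τ ≤ R) : gradNorm n v x ≤ 2 * τ := by
  have hSB : Metric.closedBall (0 : Eu n) R ⊆ Metric.ball 0 1 :=
    Metric.closedBall_subset_ball hR1
  rw [← grd_norm]
  set G := grd n v x with hG
  by_cases hG0 : G = 0
  · rw [hG0, norm_zero]; positivity
  have hGp : 0 < ‖G‖ := norm_pos_iff.2 hG0
  have hn : ‖((1 / τ) / ‖G‖) • G‖ = 1 / τ := by
    rw [norm_smul, Real.norm_of_nonneg (by positivity), div_mul_cancel₀ _ hGp.ne']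
  have hζ : x + ((1 / τ) / ‖G‖) • G ∈ Metric.closedBall (0 : Eu n) R := by
    simp only [Metric.mem_closedBall, dist_zero_right]
    refine (norm_add_le _ _).trans ?_
    rw [hn]; exact hxR
  have h := hx.2 ⟨_, hζ⟩
  simp only [add_sub_cancel_left] at h
  rw [hn, grd_inner, ← hG, inner_smul_right, real_inner_self_eq_norm_sq] at h
  have e1 : 1 / τ / ‖G‖ * ‖G‖ ^ 2 = ‖G‖ / τ := by field_simp
  have e2 : τ ^ 2 / 2 * (1 / τ) ^ 2 = 1 / 2 := by field_simp
  rw [e1, e2] at h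
  have h3 := hv1 _ (hSB hζ)
  have h4 := hv0 x (hSB (Metric.ball_subset_closedBall hx.1))
  have h5 : ‖G‖ / τ ≤ 2 := by linarith
  rwa [div_le_iff₀ hτ] at h5


theorem step_alg {n : ℕ} {A lam Lam σ β : ℝ} (hlam : 0 < lam) (hLam : lam ≤ Lam) (hσ : 0 < σ)
    (hβ : 0 ≤ β) (hA : A = 2 * (n * Lam + 1) / lam) :
    (3 * σ ^ 2)⁻¹ ^ n * (((n * Lam * (4 * σ ^ 2)) + β * (4 * σ)) / lam) ^ n
      ≤ (2 * A) ^ n * (1 + (σ ^ n)⁻¹ * β ^ n) := by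
  have hn0 : (0:ℝ) ≤ n := by positivity
  have hL : 0 < Lam := hlam.trans_le hLam
  have h1 : (3 * σ ^ 2)⁻¹ * (((n * Lam * (4 * σ ^ 2)) + β * (4 * σ)) / lam) ≤ A * (1 + β / σ) := by
    have e : (3 * σ ^ 2)⁻¹ * (((n * Lam * (4 * σ ^ 2)) + β * (4 * σ)) / lam) =
        (4 / 3) * (n * Lam / lam) + (4 / 3) * ((1 / lam) * (β / σ)) := by
      field_simp
    have e2 : A * (1 + β / σ) = 2 * (n * Lam / lam) + 2 * (1 / lam) + 2 * (n * Lam / lam) * (β / σ)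
        + 2 * ((1 / lam) * (β / σ)) := by
      rw [hA]; field_simp; ring
    rw [e, e2]
    have p1 : 0 ≤ n * Lam / lam := by positivity
    have p2 : 0 ≤ 1 / lam := by positivity
    have p3 : 0 ≤ n * Lam / lam * (β / σ) := by positivity
    have p4 : 0 ≤ (1 / lam) * (β / σ) := by positivity
    linarith
  have hA0 : 0 ≤ A := by rw [hA]; positivity
  rw [← mul_pow]
  refine (pow_le_pow_left₀ (by positivity) h1 n).trans ?_
  rw [mul_pow, mul_pow, mul_assoc, mul_left_comm]
  have h2 := add_pow_le (zero_le_one (α := ℝ)) (show 0 ≤ β / σ by positivity) n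
  rw [one_pow] at h2
  have h3 : (2:ℝ) ^ (n - 1) ≤ 2 ^ n := pow_le_pow_right₀ (by norm_num) (by omega)
  have h4 : (1 + β / σ) ^ n ≤ 2 ^ n * (1 + (σ ^ n)⁻¹ * β ^ n) := by
    refine h2.trans ?_
    rw [div_pow, div_eq_inv_mul (β ^ n)]
    gcongr
  calc A ^ n * (1 + β / σ) ^ n ≤ A ^ n * (2 ^ n * (1 + (σ ^ n)⁻¹ * β ^ n)) := by gcongr
    _ = _ := by ring

theorem ct_trace {n : ℕ} {lam Lam q K : ℝ} (hlam : 0 < lam) (hLam : lam ≤ Lam) {b v : Eu n → ℝ}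
    (hs : Sup n lam Lam q K b v) (hv1 : ∀ x ∈ Metric.ball (0 : Eu n) 1, v x ≤ 1) {R τ : ℝ}
    (hR1 : R < 1) (hτ : 0 < τ) {x : Eu n} (hx : x ∈ Ct n v R (τ ^ 2)) (hxR : ‖x‖ + 1 / τ ≤ R) :
    (hess n v x + (τ ^ 2) • (1 : Matrix (Fin n) (Fin n) ℝ)).trace
      ≤ ((n * Lam * τ ^ 2) + b x * (2 * τ)) / lam := by
  have hxB : x ∈ Metric.ball (0 : Eu n) 1 := Metric.ball_subset_ball hR1.le hx.1
  have hg := ct_grad hR1 hτ hs.u0 hv1 hx hxR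
  have hp := ct_psd (hs.uC x hxB) hx
  have hb := hs.b0 x hxB
  have h := pucci_trace (P := -((τ ^ 2) • (1 : Matrix (Fin n) (Fin n) ℝ))) (c := -(n * Lam * τ ^ 2))
    (f := b x * (2 * τ)) hLam
    ((hs.sup x hxB).trans (mul_le_mul_of_nonneg_left hg hb)) (by rwa [sub_neg_eq_add]) ?_
  · rw [sub_neg_eq_add] at h
    rw [le_div_iff₀ hlam]
    linarith
  · intro A hA
    have h1 := hA.trace_le
    have := mul_le_mul_of_nonneg_left h1 (sq_nonneg τ)
    simp only [Matrix.mul_neg, Matrix.trace_neg, Matrix.mul_smul, Matrix.mul_one, Matrix.trace_smul,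
      smul_eq_mul]
    linarith

set_option maxHeartbeats 1000000 in
theorem mooney_step {n : ℕ} (hn : 1 ≤ n) {lam Lam q K : ℝ} (hlam : 0 < lam) (hLam : lam ≤ Lam)
    (hq : (n : ℝ) < q) (hK : 0 < K) :
    ∃ C C' : ℝ, 0 < C ∧ 0 < C' ∧ ∀ b v : Eu n → ℝ, Sup n lam Lam q K b v →
      (∀ x ∈ Metric.ball (0 : Eu n) 1, v x ≤ 1) → ∀ R ρ σ : ℝ, R < 1 → 1 ≤ σ → ρ + 2 / σ ≤ R →
        (1 + C) * volume.real (Metric.ball (0 : Eu n) ρ \ Ct n v R (4 * σ ^ 2)) ≤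
          C * volume.real (Metric.ball (0 : Eu n) (ρ + 1 / σ) \ Ct n v R (σ ^ 2)) + C' / σ := by
  obtain ⟨K', hK', hhol⟩ := holder_b hn hq hK
  have hL : 0 < Lam := hlam.trans_le hLam
  set A := 2 * (n * Lam + 1) / lam with hA
  have hA0 : 0 < A := by rw [hA]; positivity
  refine ⟨(2 * A) ^ n, (2 * A) ^ n * K' ^ n, by positivity, by positivity, ?_⟩
  intro b v hs hv1 R ρ σ hR1 hσ1 hρ
  have hσ : 0 < σ := by linarith
  have hσi : 2 / σ = 1 / σ + 1 / σ := by ring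
  have hσp : 0 < 1 / σ := by positivity
  set Z := Metric.ball (0 : Eu n) ρ \ Ct n v R (σ ^ 2) with hZ
  set E := Metric.ball (0 : Eu n) (ρ + 1 / σ) ∩ (Ct n v R (4 * σ ^ 2) \ Ct n v R (σ ^ 2)) with hE
  have hRB : Metric.ball (0 : Eu n) R ⊆ Metric.ball 0 1 := Metric.ball_subset_ball hR1.le
  have hm : ∀ a, MeasurableSet (Ct n v R a) := fun a => Ct_meas fun x hx => hs.uC x (hRB hx)
  have hEm : MeasurableSet E := Metric.isOpen_ball.measurableSet.inter ((hm _).diff (hm _))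
  have hEB : E ⊆ Metric.ball 0 1 := fun x hx => hRB hx.2.1.1
  have h4 : 4 * σ ^ 2 = (2 * σ) ^ 2 := by ring
  have hvc : ContinuousOn (fun ζ => v ζ + σ ^ 2 / 2 * ‖ζ‖ ^ 2) (Metric.closedBall (0 : Eu n) R) :=
    ((contOn_of hs.uC).mono (Metric.closedBall_subset_ball hR1)).add
      (Continuous.continuousOn (by fun_prop))
  have hopt : ∀ z : Eu n, ∃ (c : ℝ) (P : Eu n), ‖z‖ < R →
      (∀ ζ ∈ Metric.closedBall (0 : Eu n) R,
        c + inner ℝ P (ζ - z) ≤ v ζ + σ ^ 2 / 2 * ‖ζ‖ ^ 2) ∧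
      ∀ (c' : ℝ) (P' : Eu n), (∀ ζ ∈ Metric.closedBall (0 : Eu n) R,
        c' + inner ℝ P' (ζ - z) ≤ v ζ + σ ^ 2 / 2 * ‖ζ‖ ^ 2) → c' ≤ c := by
    intro z
    by_cases hz : ‖z‖ < R
    · obtain ⟨c, P, h⟩ := opt_slope hvc hz
      exact ⟨c, P, fun _ => h⟩
    · exact ⟨0, 0, fun h => absurd h hz⟩
  choose c P hcP using hopt
  have hZn : ∀ z ∈ Z, ‖z‖ < ρ := fun z hz => by simpa using hz.1
  have hZR : ∀ z ∈ Z, ‖z‖ < R := fun z hz => by have := hZn z hz; linarith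
  -- expansion
  have hexp : ∀ z₁ ∈ Z, ∀ z₂ ∈ Z, 3 * σ ^ 2 * ‖z₁ - z₂‖ ≤
      ‖(P z₁ + (3 * σ ^ 2) • z₁) - (P z₂ + (3 * σ ^ 2) • z₂)‖ := by
    have key : ∀ z₁ ∈ Z, ∀ z₂ ∈ Z, c z₁ + inner ℝ (P z₁) (z₂ - z₁) ≤ c z₂ := by
      intro z₁ h1 z₂ h2
      refine (hcP z₂ (hZR z₂ h2)).2 _ (P z₁) fun ζ hζ => ?_
      refine le_trans (le_of_eq ?_) ((hcP z₁ (hZR z₁ h1)).1 ζ hζ)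
      rw [add_assoc, ← inner_add_right]
      congr 2; abel
    intro z₁ h1 z₂ h2
    have k1 := key z₁ h1 z₂ h2
    have k2 := key z₂ h2 z₁ h1
    by_cases hz : ‖z₁ - z₂‖ = 0
    · rw [hz, mul_zero]; exact norm_nonneg _
    have hz0 : 0 < ‖z₁ - z₂‖ := lt_of_le_of_ne (norm_nonneg _) (Ne.symm hz)
    have e1 : (P z₁ + (3 * σ ^ 2) • z₁) - (P z₂ + (3 * σ ^ 2) • z₂) =
        (P z₁ - P z₂) + (3 * σ ^ 2) • (z₁ - z₂) := by rw [smul_sub]; abel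
    rw [e1]
    have cs := real_inner_le_norm ((P z₁ - P z₂) + (3 * σ ^ 2) • (z₁ - z₂)) (z₁ - z₂)
    rw [inner_add_left, inner_smul_left, inner_sub_left, real_inner_self_eq_norm_sq] at cs
    simp only [conj_trivial] at cs
    have e2 : inner ℝ (P z₁) (z₂ - z₁) = - inner ℝ (P z₁) (z₁ - z₂) := by
      rw [← inner_neg_right]; congr 1; abel
    rw [e2] at k1
    refine le_of_mul_le_mul_right ?_ hz0
    have e3 : 3 * σ ^ 2 * ‖z₁ - z₂‖ * ‖z₁ - z₂‖ = 3 * σ ^ 2 * ‖z₁ - z₂‖ ^ 2 := by ring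
    rw [e3]
    linarith
  have hvol1 := vol_antilip hn (show 0 < 3 * σ ^ 2 by positivity) Z _ hexp
  have himg : (fun z => P z + (3 * σ ^ 2) • z) '' Z ⊆
      grd n (fun y => v y + 2 * σ ^ 2 * ‖y‖ ^ 2) '' E := by
    rintro _ ⟨z, hz, rfl⟩
    have hzr := hZn z hz
    obtain ⟨k1, k2⟩ := hcP z (hZR z hz)
    obtain ⟨x, x1, x2, x3, x4⟩ := contact_pt hR1 hσ hs.uC hs.u0 hv1 (by linarith) hz.2 k1 k2
    refine ⟨x, ⟨?_, x1, x2⟩, x4⟩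
    have : ‖x‖ ≤ ‖z‖ + ‖x - z‖ := by
      have := norm_add_le z (x - z)
      simpa using this
    simp only [Metric.mem_ball, dist_zero_right]
    linarith
  have hhess : ∀ x ∈ E, hess n (fun y => v y + 2 * σ ^ 2 * ‖y‖ ^ 2) x =
      hess n v x + ((2 * σ) ^ 2) • (1 : Matrix (Fin n) (Fin n) ℝ) := by
    intro x hx
    rw [hess_add (hs.uC x (hEB hx)) (cm_contDiff _).contDiffAt, cm_hess]
    congr 2; ring
  have hvol2 := img (w := fun y => v y + 2 * σ ^ 2 * ‖y‖ ^ 2)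
    (F := fun x => ((n * Lam * (4 * σ ^ 2)) + b x * (4 * σ)) / lam) hEm
    (fun x hx => (hs.uC x (hEB hx)).add (cm_contDiff _).contDiffAt)
    (fun x hx => by
      rw [hhess x hx]
      exact ct_psd (hs.uC x (hEB hx)) (h4 ▸ hx.2.1))
    (fun x hx => by
      rw [hhess x hx]
      have hxn : ‖x‖ < ρ + 1 / σ := by simpa using hx.1
      have := ct_trace hlam hLam hs hv1 hR1 (show 0 < 2 * σ by positivity) (h4 ▸ hx.2.1)
        (by
          have : 1 / (2 * σ) = (1 / σ) / 2 := by field_simp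
          rw [this]; linarith)
      refine this.trans (le_of_eq ?_)
      ring)
  have hbE := hhol b hs.bc hs.b0 hs.bL E 0 1 zero_le_one hEm hEB
    (hEB.trans Metric.ball_subset_closedBall)
  rw [Real.one_rpow, mul_one] at hbE
  have hbm : AEMeasurable (fun x => ENNReal.ofReal (b x ^ n)) (volume.restrict E) :=
    (((hs.bc.mono hEB).pow n).aemeasurable hEm).ennreal_ofReal
  have hvolZ : volume Z ≤ ENNReal.ofReal ((2 * A) ^ n) *
      (volume E + ENNReal.ofReal ((σ ^ n)⁻¹) * ENNReal.ofReal (K' ^ n)) := by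
    calc volume Z ≤ ENNReal.ofReal ((3 * σ ^ 2)⁻¹ ^ n) *
          ∫⁻ x in E, ENNReal.ofReal ((((n * Lam * (4 * σ ^ 2)) + b x * (4 * σ)) / lam) ^ n) := by
          refine hvol1.trans ?_
          gcongr
          exact (measure_mono himg).trans hvol2
      _ = ∫⁻ x in E, ENNReal.ofReal ((3 * σ ^ 2)⁻¹ ^ n) *
          ENNReal.ofReal ((((n * Lam * (4 * σ ^ 2)) + b x * (4 * σ)) / lam) ^ n) := by
          rw [lintegral_const_mul' _ _ ENNReal.ofReal_ne_top]
      _ ≤ ∫⁻ x in E, ENNReal.ofReal ((2 * A) ^ n) *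
          (1 + ENNReal.ofReal ((σ ^ n)⁻¹) * ENNReal.ofReal (b x ^ n)) := by
          refine setLIntegral_mono' hEm fun x hx => ?_
          have hb := hs.b0 x (hEB hx)
          rw [← ENNReal.ofReal_mul (by positivity), ← ENNReal.ofReal_mul (by positivity),
            ← ENNReal.ofReal_one, ← ENNReal.ofReal_add zero_le_one (by positivity),
            ← ENNReal.ofReal_mul (by positivity)]
          exact ENNReal.ofReal_le_ofReal (step_alg hlam hLam hσ hb hA)
      _ = ENNReal.ofReal ((2 * A) ^ n) *
          (volume E + ENNReal.ofReal ((σ ^ n)⁻¹) * ∫⁻ x in E, ENNReal.ofReal (b x ^ n)) := by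
          rw [lintegral_const_mul' _ _ ENNReal.ofReal_ne_top,
            lintegral_add_left measurable_const, lintegral_const_mul' _ _ ENNReal.ofReal_ne_top]
          simp
      _ ≤ _ := by gcongr
  have fin : ∀ (r : ℝ) (T : Set (Eu n)), volume (Metric.ball (0 : Eu n) r \ T) ≠ ⊤ := fun r T =>
    ((measure_mono Set.diff_subset).trans_lt measure_ball_lt_top).ne
  have finE : volume E ≠ ⊤ := ((measure_mono Set.inter_subset_left).trans_lt measure_ball_lt_top).ne
  have hZr : volume.real Z ≤ (2 * A) ^ n * (volume.real E + (σ ^ n)⁻¹ * K' ^ n) := by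
    rw [← ENNReal.ofReal_mul (by positivity), ← ENNReal.ofReal_toReal finE,
      ← ENNReal.ofReal_add ENNReal.toReal_nonneg (by positivity),
      ← ENNReal.ofReal_mul (by positivity)] at hvolZ
    have := ENNReal.toReal_mono ENNReal.ofReal_ne_top hvolZ
    rw [ENNReal.toReal_ofReal] at this
    · exact this
    · exact mul_nonneg (by positivity) (add_nonneg ENNReal.toReal_nonneg (by positivity))
  have hsplit : volume.real E + volume.real (Metric.ball (0 : Eu n) ρ \ Ct n v R (4 * σ ^ 2)) ≤
      volume.real (Metric.ball (0 : Eu n) (ρ + 1 / σ) \ Ct n v R (σ ^ 2)) := by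
    rw [← measureReal_union _ _ finE (fin _ _)]
    · refine measureReal_mono ?_ (fin _ _)
      rintro x (hx | hx)
      · exact ⟨hx.1, hx.2.2⟩
      · refine ⟨Metric.ball_subset_ball (by linarith) hx.1, fun h => hx.2 (Ct_mono ?_ h)⟩
        have := sq_nonneg σ
        linarith
    · rw [Set.disjoint_left]
      intro x hx hx'
      exact hx'.2 hx.2.1
    · exact Metric.isOpen_ball.measurableSet.diff (hm _)
  have hmonoZ : volume.real (Metric.ball (0 : Eu n) ρ \ Ct n v R (4 * σ ^ 2)) ≤ volume.real Z := by
    refine measureReal_mono ?_ (fin _ _)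
    refine Set.diff_subset_diff_right (Ct_mono ?_)
    have := sq_nonneg σ
    linarith
  have hσn : (σ ^ n)⁻¹ ≤ 1 / σ := by
    rw [one_div]
    refine inv_anti₀ hσ ?_
    calc σ = σ ^ 1 := (pow_one σ).symm
      _ ≤ σ ^ n := pow_le_pow_right₀ hσ1 hn
  have hA2 : 0 ≤ (2 * A) ^ n := by positivity
  have f1 := mul_le_mul_of_nonneg_left hsplit hA2
  have f2 : (2 * A) ^ n * ((σ ^ n)⁻¹ * K' ^ n) ≤ (2 * A) ^ n * K' ^ n / σ := by
    have := mul_le_mul_of_nonneg_left hσn (show 0 ≤ (2 * A) ^ n * K' ^ n by positivity)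
    calc (2 * A) ^ n * ((σ ^ n)⁻¹ * K' ^ n) = (2 * A) ^ n * K' ^ n * (σ ^ n)⁻¹ := by ring
      _ ≤ _ := this
      _ = _ := by ring
  rw [mul_add] at hZr
  linarith


theorem shell_vol {n : ℕ} (hn : 1 ≤ n) {δ : ℝ} (h0 : 0 ≤ δ) (h1 : δ ≤ 1) :
    volume.real (Metric.ball (0 : Eu n) 1 \ Metric.ball 0 (1 - δ)) ≤
      volume.real (Metric.ball (0 : Eu n) 1) * n * δ := by
  have : Nonempty (Fin n) := ⟨⟨0, hn⟩⟩
  rw [measureReal_diff (Metric.ball_subset_ball (by linarith)) Metric.isOpen_ball.measurableSet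
    measure_ball_lt_top.ne]
  have e : volume.real (Metric.ball (0 : Eu n) (1 - δ)) =
      (1 - δ) ^ n * volume.real (Metric.ball (0 : Eu n) 1) := by
    rw [measureReal_def, Measure.addHaar_ball volume (0 : Eu n) (by linarith : 0 ≤ 1 - δ)]
    simp only [finrank_euclideanSpace, Fintype.card_fin]
    rw [ENNReal.toReal_mul, ENNReal.toReal_ofReal (pow_nonneg (by linarith) _)]
    rfl
  rw [e]
  have hb := one_add_mul_le_pow (show (-2:ℝ) ≤ -δ by linarith) n
  have hV : 0 ≤ volume.real (Metric.ball (0 : Eu n) 1) := measureReal_nonneg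
  have := mul_le_mul_of_nonneg_left hb hV
  rw [show 1 + -δ = 1 - δ by ring] at this
  linarith

theorem mooney {n : ℕ} (hn : 1 ≤ n) {lam Lam q K : ℝ} (hlam : 0 < lam) (hLam : lam ≤ Lam)
    (hq : (n : ℝ) < q) (hK : 0 < K) :
    ∃ C θ : ℝ, 0 < C ∧ 1 / 2 ≤ θ ∧ θ < 1 ∧ ∀ b v : Eu n → ℝ, Sup n lam Lam q K b v →
      (∀ x ∈ Metric.ball (0 : Eu n) 1, v x ≤ 1) → ∀ j : ℕ, 3 ≤ j →
        volume.real (Metric.ball (0 : Eu n) 1 \ (Ct n v (1 - (1 / 2) ^ j) ((4 ^ j) ^ 2) ∩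
          Metric.ball (0 : Eu n) (1 - 5 * (1 / 2) ^ j))) ≤ C * θ ^ j := by
  obtain ⟨C, C', hC, hC', hstep⟩ := mooney_step hn hlam hLam hq hK
  set V := volume.real (Metric.ball (0 : Eu n) 1) with hV
  have hV0 : 0 ≤ V := measureReal_nonneg
  set θ₀ := C / (1 + C) with hθ₀
  have hθ0 : 0 < θ₀ := by positivity
  have hθ1 : θ₀ < 1 := by rw [hθ₀, div_lt_one (by positivity)]; linarith
  have hn0 : (0:ℝ) ≤ n := by positivity
  refine ⟨V + C' + V * n * 5, max θ₀ (1 / 2), by positivity, le_max_right _ _,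
    max_lt hθ1 (by norm_num), ?_⟩
  intro b v hs hv1 j hj
  set δ : ℝ := (1 / 2) ^ j with hδ
  have hδ0 : 0 < δ := by positivity
  have hδ1 : δ ≤ 1 / 8 := by
    calc δ ≤ (1 / 2) ^ 3 := pow_le_pow_of_le_one (by norm_num) (by norm_num) hj
      _ = 1 / 8 := by norm_num
  have fin : ∀ (r : ℝ) (T : Set (Eu n)), volume (Metric.ball (0 : Eu n) r \ T) ≠ ⊤ := fun r T =>
    ((measure_mono Set.diff_subset).trans_lt measure_ball_lt_top).ne
  have hind : ∀ i : ℕ, volume.real (Metric.ball (0 : Eu n) (1 - 5 * δ + 2 * (1 / 2) ^ (j + i)) \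
      Ct n v (1 - δ) ((2 ^ (j + i)) ^ 2)) ≤ θ₀ ^ i * V + C' * δ := by
    intro i
    induction i with
    | zero =>
      rw [pow_zero, one_mul, add_zero]
      have h1 : volume.real (Metric.ball (0 : Eu n) (1 - 5 * δ + 2 * (1 / 2) ^ j) \
        Ct n v (1 - δ) ((2 ^ j) ^ 2)) ≤ V := by
        refine measureReal_mono ?_ measure_ball_lt_top.ne
        refine Set.diff_subset.trans (Metric.ball_subset_ball ?_)
        rw [← hδ]; linarith
      have : 0 ≤ C' * δ := by positivity
      linarith
    | succ i ih =>
      have hp : (1 / 2 : ℝ) ^ (j + i) ≤ δ := by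
        rw [hδ]; exact pow_le_pow_of_le_one (by norm_num) (by norm_num) (by omega)
      have e1 : (1:ℝ) / 2 ^ (j + i) = (1 / 2) ^ (j + i) := by rw [div_pow, one_pow]
      have e2 : (2:ℝ) / 2 ^ (j + i) = 2 * (1 / 2) ^ (j + i) := by rw [← e1]; ring
      have e3 : (1 / 2 : ℝ) ^ (j + (i + 1)) = (1 / 2) ^ (j + i) / 2 := by
        rw [← add_assoc, pow_succ]; ring
      have e4 : (4:ℝ) * (2 ^ (j + i)) ^ 2 = (2 ^ (j + (i + 1))) ^ 2 := by
        rw [← add_assoc, pow_succ (2:ℝ) (j + i)]; ring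
      have h := hstep b v hs hv1 (1 - δ) (1 - 5 * δ + 2 * (1 / 2) ^ (j + (i + 1))) (2 ^ (j + i))
        (by linarith) (one_le_pow₀ (by norm_num)) (by rw [e2, e3]; linarith)
      rw [e4] at h
      have e5 : 1 - 5 * δ + 2 * (1 / 2) ^ (j + (i + 1)) + 1 / 2 ^ (j + i) =
          1 - 5 * δ + 2 * (1 / 2 : ℝ) ^ (j + i) := by rw [e1, e3]; ring
      rw [e5] at h
      have e6 : C' / 2 ^ (j + i) ≤ C' * δ := by
        have : C' / 2 ^ (j + i) = C' * (1 / 2) ^ (j + i) := by rw [← e1]; ring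
        rw [this]; exact mul_le_mul_of_nonneg_left hp hC'.le
      have h2 := mul_le_mul_of_nonneg_left ih hC.le
      have e7 : C = (1 + C) * θ₀ := by rw [hθ₀]; field_simp
      have e8 : C * (θ₀ ^ i * V) = (1 + C) * (θ₀ ^ (i + 1) * V) := by
        conv_lhs => rw [e7]
        rw [pow_succ]; ring
      refine le_of_mul_le_mul_left ?_ (show 0 < 1 + C by linarith)
      rw [mul_add] at h2 ⊢
      linarith
  have hj' := hind j
  have e16 : ((2:ℝ) ^ (j + j)) ^ 2 = (4 ^ j) ^ 2 := by
    rw [← two_mul, pow_mul]; norm_num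
  rw [e16] at hj'
  have hsub : Metric.ball (0 : Eu n) 1 \ (Ct n v (1 - δ) ((4 ^ j) ^ 2) ∩
      Metric.ball (0 : Eu n) (1 - 5 * δ)) ⊆
      (Metric.ball (0 : Eu n) 1 \ Metric.ball 0 (1 - 5 * δ)) ∪
      (Metric.ball (0 : Eu n) (1 - 5 * δ + 2 * (1 / 2) ^ (j + j)) \
      Ct n v (1 - δ) ((4 ^ j) ^ 2)) := by
    rintro x ⟨hx, hx'⟩
    by_cases h : x ∈ Metric.ball (0 : Eu n) (1 - 5 * δ)
    · right
      refine ⟨Metric.ball_subset_ball ?_ h, fun hc => hx' ⟨hc, h⟩⟩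
      have : (0:ℝ) ≤ 2 * (1 / 2) ^ (j + j) := by positivity
      linarith
    · left; exact ⟨hx, h⟩
  have hs1 := shell_vol hn (δ := 5 * δ) (by linarith) (by linarith)
  rw [← hV] at hs1
  have hun := (measureReal_mono hsub (measure_union_lt_top (fin _ _).lt_top (fin _ _).lt_top).ne).trans
    (measureReal_union_le _ _)
  have m1 : θ₀ ^ j ≤ (max θ₀ (1 / 2)) ^ j := pow_le_pow_left₀ hθ0.le (le_max_left _ _) _
  have m2 : δ ≤ (max θ₀ (1 / 2)) ^ j := pow_le_pow_left₀ (by norm_num) (le_max_right _ _) _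
  have m3 := mul_le_mul_of_nonneg_left m1 hV0
  have m4 := mul_le_mul_of_nonneg_left m2 hC'.le
  have m5 := mul_le_mul_of_nonneg_left m2 (show 0 ≤ V * n * 5 by positivity)
  linarith


theorem hess_bdd {n : ℕ} {w : Eu n → ℝ} {x : Eu n} (hw : ContDiffAt ℝ 2 w x) :
    ∃ t : ℝ, 0 ≤ t ∧ (hess n w x + t • (1 : Matrix (Fin n) (Fin n) ℝ)).PosSemidef := by
  have ht : 0 ≤ ‖fderiv ℝ (fderiv ℝ w) x‖ := by positivity
  refine ⟨‖fderiv ℝ (fderiv ℝ w) x‖, ht, ?_⟩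
  have hsym : (‖fderiv ℝ (fderiv ℝ w) x‖ • (1 : Matrix (Fin n) (Fin n) ℝ)).PosSemidef :=
    Matrix.PosSemidef.one.smul ht
  refine Matrix.PosSemidef.of_dotProduct_mulVec_nonneg
    (Matrix.IsHermitian.add (hess_symm hw) hsym.1) fun ξ₀ => ?_
  set ξ : Eu n := WithLp.toLp 2 ξ₀ with hξ
  have hq := hess_quad hw ξ
  have e1 : star ξ₀ ⬝ᵥ (hess n w x).mulVec ξ₀ = fderiv ℝ (fderiv ℝ w) x ξ ξ := by
    rw [← hq]; simp [hξ]
  have e2 : ξ₀ ⬝ᵥ ξ₀ = ‖ξ‖ ^ 2 := by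
    rw [EuclideanSpace.norm_sq_eq, dotProduct]
    refine Finset.sum_congr rfl fun i _ => ?_
    simp [hξ, sq]
  rw [Matrix.add_mulVec, dotProduct_add, e1, Matrix.smul_mulVec, Matrix.one_mulVec,
    dotProduct_smul, star_trivial, e2, smul_eq_mul]
  have h1 := (fderiv ℝ (fderiv ℝ w) x).le_opNorm₂ ξ ξ
  have h2 := neg_abs_le (fderiv ℝ (fderiv ℝ w) x ξ ξ)
  rw [Real.norm_eq_abs] at h1
  rw [sq]
  linarith

theorem pucci_le {n : ℕ} {lam Lam : ℝ} (hlam : 0 < lam) {w : Eu n → ℝ} {x : Eu n}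
    (hw : ContDiffAt ℝ 2 w x) {A : Matrix (Fin n) (Fin n) ℝ} (hA : Adm n lam Lam A) :
    pucciMinus n lam Lam (hess n w x) ≤ (A * hess n w x).trace := by
  obtain ⟨t, ht, hH⟩ := hess_bdd hw
  refine csInf_le ⟨-(Lam * n * t), ?_⟩ ⟨A, hA.1, hA.2.1, hA.2.2, rfl⟩
  rintro _ ⟨A', h1, h2, h3, rfl⟩
  have hA' : Adm n lam Lam A' := ⟨h1, h2, h3⟩
  have e1 := hA'.lower hH
  have e2 := hA'.trace_le
  have e3 := hH.trace_nonneg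
  have e4 : (A' * (hess n w x + t • (1 : Matrix (Fin n) (Fin n) ℝ))).trace =
      (A' * hess n w x).trace + t * A'.trace := by
    rw [Matrix.mul_add, Matrix.trace_add, Matrix.mul_smul, Matrix.mul_one, Matrix.trace_smul,
      smul_eq_mul]
  have e5 : 0 ≤ lam * (hess n w x + t • (1 : Matrix (Fin n) (Fin n) ℝ)).trace :=
    mul_nonneg hlam.le e3
  have e6 := mul_le_mul_of_nonneg_left e2 ht
  linarith

/-- the truncating profile -/
noncomputable def prof (M s : ℝ) : ℝ := 1 - Real.exp (-s / M)

theorem prof_deriv (M s : ℝ) : HasDerivAt (prof M) (Real.exp (-s / M) / M) s := by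
  have h : HasDerivAt (fun s : ℝ => -s / M) (-1 / M) s := (hasDerivAt_id s).neg.div_const M
  have := (h.exp).const_sub 1
  exact this.congr_deriv (by ring)

theorem prof_deriv2 (M s : ℝ) :
    HasDerivAt (fun s => Real.exp (-s / M) / M) (-(Real.exp (-s / M) / M ^ 2)) s := by
  have h : HasDerivAt (fun s : ℝ => -s / M) (-1 / M) s := (hasDerivAt_id s).neg.div_const M
  have := (h.exp).div_const M
  exact this.congr_deriv (by ring)

theorem prof_contDiff (M : ℝ) : ContDiff ℝ 2 (prof M) := by
  unfold prof
  exact contDiff_const.sub (Real.contDiff_exp.comp (contDiff_id.neg.div_const M))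

theorem prof_hess {n : ℕ} (M : ℝ) {u : Eu n → ℝ} {x : Eu n} (hu : ContDiffAt ℝ 2 u x) :
    hess n (fun y => prof M (u y)) x =
      (-(Real.exp (-u x / M) / M ^ 2)) • Matrix.vecMulVec (gvec n u x) (gvec n u x)
      + (Real.exp (-u x / M) / M) • hess n u x :=
  hess_comp hu (prof_deriv M) (prof_deriv2 M (u x)) (prof_contDiff M)

theorem prof_grad {n : ℕ} {M : ℝ} (hM : 0 < M) {u : Eu n → ℝ} {x : Eu n} (hu : ContDiffAt ℝ 2 u x) :
    gradNorm n (fun y => prof M (u y)) x = Real.exp (-u x / M) / M * gradNorm n u x := by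
  rw [gradNorm_comp (hu.differentiableAt (by norm_num)) (prof_deriv M (u x)),
    abs_of_nonneg (by positivity)]

theorem prof_sup {n : ℕ} {lam Lam q K M : ℝ} (hlam : 0 < lam) (hLam : lam ≤ Lam) (hM : 0 < M)
    {b u : Eu n → ℝ} (hs : Sup n lam Lam q K b u) :
    Sup n lam Lam q K b (fun y => prof M (u y)) where
  bc := hs.bc
  b0 := hs.b0
  bL := hs.bL
  uC := fun x hx => (prof_contDiff M).contDiffAt.comp x (hs.uC x hx)
  u0 := fun x hx => by
    have := hs.u0 x hx
    have h2 : Real.exp (-u x / M) ≤ 1 := by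
      rw [Real.exp_le_one_iff]
      exact div_nonpos_of_nonpos_of_nonneg (by linarith) hM.le
    simp only [prof]; linarith
  sup := fun x hx => by
    have hu := hs.uC x hx
    rw [prof_grad hM hu]
    set e := Real.exp (-u x / M) / M with he
    have he0 : 0 < e := by positivity
    apply le_of_forall_pos_le_add
    intro η hη
    obtain ⟨A, hA, hAt⟩ := pucci_exists hLam (hs.sup x hx) (show 0 < η / e by positivity)
    refine (pucci_le hlam ((prof_contDiff M).contDiffAt.comp x hu) hA).trans ?_
    have e0 : hess n (prof M ∘ u) x = hess n (fun y => prof M (u y)) x := rfl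
    rw [e0, prof_hess M hu, Matrix.mul_add, Matrix.trace_add, Matrix.mul_smul, Matrix.mul_smul,
      Matrix.trace_smul, Matrix.trace_smul, smul_eq_mul, smul_eq_mul, ← he]
    have h1 := hA.lower (psd_vecMulVec (gvec n u x))
    have h2 : 0 ≤ lam * (Matrix.vecMulVec (gvec n u x) (gvec n u x)).trace :=
      mul_nonneg hlam.le (psd_vecMulVec _).trace_nonneg
    have h3 : 0 ≤ Real.exp (-u x / M) / M ^ 2 *
        (A * Matrix.vecMulVec (gvec n u x) (gvec n u x)).trace :=
      mul_nonneg (by positivity) (h2.trans h1)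
    have h4 := mul_le_mul_of_nonneg_left hAt.le he0.le
    rw [mul_add, mul_div_cancel₀ _ he0.ne'] at h4
    linarith

theorem prof_point {n : ℕ} {lam Lam q K M : ℝ} (hlam : 0 < lam) (hLam : lam ≤ Lam) (hM : 0 < M)
    {b u : Eu n → ℝ} (hs : Sup n lam Lam q K b u) {x : Eu n} {R σ : ℝ} (hR1 : R < 1) (hσ : 0 < σ)
    (hx : x ∈ Ct n (fun y => prof M (u y)) R (σ ^ 2)) (hxR : ‖x‖ + 1 / σ ≤ R)
    (hhalf : prof M (u x) ≤ 1 / 2) :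
    -(pucciMinus n lam Lam (hess n u x) - b x * gradNorm n u x) ≤
      Lam * n * (2 * σ ^ 2 * M) + b x * (4 * σ * M) := by
  have hxB : x ∈ Metric.ball (0 : Eu n) 1 := Metric.ball_subset_ball hR1.le hx.1
  have hu := hs.uC x hxB
  have hsv := prof_sup hlam hLam hM hs
  have hv1 : ∀ x ∈ Metric.ball (0 : Eu n) 1, prof M (u x) ≤ 1 := fun y _ => by
    have := Real.exp_pos (-u y / M)
    simp only [prof]; linarith
  have hg := ct_grad hR1 hσ hsv.u0 hv1 hx hxR
  have hp := ct_psd (hsv.uC x hxB) hx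
  rw [prof_grad hM hu] at hg
  rw [prof_hess M hu] at hp
  unfold prof at hhalf
  set e := Real.exp (-u x / M) with he
  have he0 : 0 < e := Real.exp_pos _
  have he2 : 1 / 2 ≤ e := by linarith
  have hgu : gradNorm n u x ≤ 4 * σ * M := by
    have h0 := gradNorm_nonneg u x
    have h1 : e * gradNorm n u x ≤ 2 * σ * M := by
      have := mul_le_mul_of_nonneg_right hg hM.le
      have e1 : e / M * gradNorm n u x * M = e * gradNorm n u x := by field_simp
      rwa [e1] at this
    have h2 := mul_le_mul_of_nonneg_right he2 h0
    linarith
  have hH : (hess n u x + (2 * σ ^ 2 * M) • (1 : Matrix (Fin n) (Fin n) ℝ)).PosSemidef := by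
    have h1 := (psd_vecMulVec (gvec n u x)).smul (show 0 ≤ e / M ^ 2 by positivity)
    have h2 := (hp.add h1).smul (show 0 ≤ M / e by positivity)
    have hc : 0 ≤ 2 * σ ^ 2 * M - M / e * σ ^ 2 := by
      have : 1 / e ≤ 2 := by rw [div_le_iff₀ he0]; linarith
      have := mul_le_mul_of_nonneg_left this (show 0 ≤ M * σ ^ 2 by positivity)
      have e3 : M * σ ^ 2 * (1 / e) = M / e * σ ^ 2 := by ring
      linarith
    have h3 := h2.add ((Matrix.PosSemidef.one (n := Fin n) (R := ℝ)).smul hc)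
    convert h3 using 1
    ext i k
    simp only [Matrix.add_apply, Matrix.smul_apply, smul_eq_mul]
    field_simp
    ring
  have h1 := pucci_ge hlam hLam (by positivity) hH
  have h2 := mul_le_mul_of_nonneg_left hgu (hs.b0 x hxB)
  linarith


theorem distr {n : ℕ} (hn : 1 ≤ n) {lam Lam q K : ℝ} (hlam : 0 < lam) (hLam : lam ≤ Lam)
    (hq : (n : ℝ) < q) (hK : 0 < K) :
    ∃ C D L θ : ℝ, 0 < C ∧ 0 < D ∧ 2 ≤ L ∧ 0 < θ ∧ θ < 1 ∧
      ∀ b u : Eu n → ℝ, Sup n lam Lam q K b u →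
      ∀ (m : ℝ) (z : Eu n), 0 < m → z ∈ Metric.ball (0 : Eu n) 1 → u z < m * (1 - ‖z‖) →
      ∀ j : ℕ, 3 ≤ j → volume {x | x ∈ Metric.ball (0 : Eu n) 1 ∧
        D * m * L ^ j < -(pucciMinus n lam Lam (hess n u x) - b x * gradNorm n u x)} ≤
          ENNReal.ofReal (C * θ ^ j) := by
  obtain ⟨c, s, N, hc, hs0, hs8, hprop⟩ := propagate hn hlam hLam hq hK
  obtain ⟨C, θ, hC, hθh, hθ1, hmoo⟩ := mooney hn hlam hLam hq hK
  obtain ⟨K', hK', hhol⟩ := holder_b hn hq hK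
  have hL0 : 0 < Lam := hlam.trans_le hLam
  set κ := s / 16 with hκ
  have hκ0 : 0 < κ := by positivity
  have hκ1 : κ ≤ 1 / 128 := by rw [hκ]; linarith
  have hn0 : (0:ℝ) ≤ n := by positivity
  refine ⟨C + K' ^ n, (2 * Lam * n + 4) * (8 / (c * κ ^ N)), 32 * 4 ^ N, θ, by positivity,
    by positivity, ?_, by linarith, hθ1, ?_⟩
  · have : (1:ℝ) ≤ 4 ^ N := one_le_pow₀ (by norm_num)
    linarith
  intro b u hs m z hm hz huz j hj
  set δ : ℝ := (1 / 2) ^ j with hδ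
  have hδ0 : 0 < δ := by positivity
  set σ : ℝ := 4 ^ j with hσd
  have hσ : 0 < σ := by positivity
  have hσδ : 1 / σ = δ ^ 2 := by
    rw [hσd, hδ, ← pow_mul, mul_comm, pow_mul, ← one_div_pow]; norm_num
  have hδ1 : δ ≤ 1 / 8 := by
    calc δ ≤ (1 / 2) ^ 3 := pow_le_pow_of_le_one (by norm_num) (by norm_num) hj
      _ = 1 / 8 := by norm_num
  have hσδ2 : 1 / σ ≤ δ := by
    rw [hσδ, sq]
    have := mul_le_mul_of_nonneg_left hδ1 hδ0.le
    linarith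
  set r := κ * (1 / σ) with hr
  have hr0 : 0 < r := by positivity
  have hrδ : r ≤ κ * δ := mul_le_mul_of_nonneg_left hσδ2 hκ0.le
  have hκδ : κ * δ ≤ 1 / 128 * δ := mul_le_mul_of_nonneg_right hκ1 hδ0.le
  have hrσ : σ * r = κ := by rw [hr]; field_simp
  set t := m / (c * r ^ N) with ht
  have ht0 : 0 < t := by positivity
  set M := 8 * t with hM
  have hM0 : 0 < M := by positivity
  set v : Eu n → ℝ := fun y => prof M (u y) with hv
  have hsv : Sup n lam Lam q K b v := prof_sup hlam hLam hM0 hs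
  have hv1 : ∀ x ∈ Metric.ball (0 : Eu n) 1, v x ≤ 1 := fun y _ => by
    have := Real.exp_pos (-u y / M)
    simp only [hv, prof]; linarith
  have hvol1 := hmoo b v hsv hv1 j hj
  have hbE := hhol b hs.bc hs.b0 hs.bL (Metric.ball 0 1) 0 1 zero_le_one
    Metric.isOpen_ball.measurableSet subset_rfl Metric.ball_subset_closedBall
  rw [Real.one_rpow, mul_one] at hbE
  have hvol2 := weak_b (T := 2 ^ j) hs.bc (by positivity) hbE
  -- good points
  have hgood : ∀ x ∈ Ct n v (1 - δ) (σ ^ 2), x ∈ Metric.ball (0 : Eu n) (1 - 5 * δ) →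
      b x ≤ 2 ^ j → -(pucciMinus n lam Lam (hess n u x) - b x * gradNorm n u x) ≤
        (2 * Lam * n + 4) * (8 / (c * κ ^ N)) * m * (32 * 4 ^ N) ^ j := by
    intro x hx hxb hbx
    have hxn : ‖x‖ < 1 - 5 * δ := by simpa using hxb
    have hxB : x ∈ Metric.ball (0 : Eu n) 1 := by
      simp only [Metric.mem_ball, dist_zero_right]; linarith
    have hxR : ‖x‖ + 1 / σ ≤ 1 - δ := by linarith
    have hrs : r ≤ s * (1 - ‖x‖) := by
      have h1 : s * (5 * δ) ≤ s * (1 - ‖x‖) := mul_le_mul_of_nonneg_left (by linarith) hs0.le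
      have h2 : κ * δ = s * δ / 16 := by rw [hκ]; ring
      have h3 : 0 < s * δ := by positivity
      linarith
    obtain ⟨y, hy, hyt⟩ : ∃ y ∈ Metric.ball x r, u y < t := by
      by_contra hcon
      push Not at hcon
      have := hprop b u hs x r t (by linarith) hr0 hrs ht0.le hcon z hz
      have e : c * r ^ N * t = m := by rw [ht]; field_simp
      rw [e] at this
      linarith
    have hyx : ‖y - x‖ < r := by simpa [dist_eq_norm] using hy
    have hyn : ‖y‖ ≤ 1 - δ := by
      have : ‖y‖ ≤ ‖x‖ + ‖y - x‖ := by
        have := norm_add_le x (y - x)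
        simpa using this
      linarith
    have hvy : v y ≤ 1 / 8 := by
      have h1 := Real.add_one_le_exp (-u y / M)
      have h2 : u y / M ≤ 1 / 8 := by
        rw [div_le_iff₀ hM0, hM]; linarith
      simp only [hv, prof]
      have h3 : -u y / M = -(u y / M) := by ring
      rw [h3] at h1 ⊢
      linarith
    have hgr : gradNorm n v x ≤ 2 * σ :=
      ct_grad (by linarith) hσ hsv.u0 hv1 hx hxR
    have hvx : v x ≤ 1 / 2 := by
      have h1 := hx.2 ⟨y, by simpa using hyn⟩
      simp only at h1
      have h2 : -(2 * κ) ≤ fderiv ℝ v x (y - x) := by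
        have h3 := (fderiv ℝ v x).le_opNorm (y - x)
        have h4 : ‖fderiv ℝ v x‖ * ‖y - x‖ ≤ 2 * σ * r :=
          mul_le_mul hgr hyx.le (norm_nonneg _) (by positivity)
        have h5 := neg_abs_le (fderiv ℝ v x (y - x))
        rw [Real.norm_eq_abs] at h3
        have : 2 * σ * r = 2 * κ := by rw [← hrσ]; ring
        linarith
      have h6 : σ ^ 2 / 2 * ‖y - x‖ ^ 2 ≤ κ ^ 2 / 2 := by
        have : ‖y - x‖ ^ 2 ≤ r ^ 2 := pow_le_pow_left₀ (norm_nonneg _) hyx.le 2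
        have := mul_le_mul_of_nonneg_left this (show 0 ≤ σ ^ 2 / 2 by positivity)
        have e : σ ^ 2 / 2 * r ^ 2 = κ ^ 2 / 2 := by rw [← hrσ]; ring
        linarith
      have h7 : κ ^ 2 ≤ 1 := pow_le_one₀ hκ0.le (by linarith)
      have h8 : κ ^ 2 ≤ 1 / 128 := by
        rw [sq]
        have := mul_le_mul_of_nonneg_left hκ1 hκ0.le
        linarith
      linarith
    have hpt := prof_point hlam hLam hM0 hs (by linarith) hσ hx hxR hvx
    refine hpt.trans ?_
    have hσ1 : 1 ≤ σ := one_le_pow₀ (by norm_num)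
    have h2j : (1:ℝ) ≤ 2 ^ j := one_le_pow₀ (by norm_num)
    have g1 : Lam * n * (2 * σ ^ 2 * M) ≤ 2 * Lam * n * (2 ^ j * (σ ^ 2 * M)) := by
      have := mul_le_mul_of_nonneg_right h2j (show 0 ≤ 2 * Lam * n * (σ ^ 2 * M) by positivity)
      linarith
    have g2 : b x * (4 * σ * M) ≤ 4 * (2 ^ j * (σ ^ 2 * M)) := by
      have k1 := mul_le_mul_of_nonneg_right hbx (show 0 ≤ 4 * σ * M by positivity)
      have k2 := mul_le_mul_of_nonneg_right hσ1 (show 0 ≤ 2 ^ j * (4 * σ * M) by positivity)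
      have e : σ * (2 ^ j * (4 * σ * M)) = 4 * (2 ^ j * (σ ^ 2 * M)) := by ring
      linarith
    have e1 : M = 8 / (c * κ ^ N) * m * σ ^ N := by
      rw [hM, ht, hr, mul_pow, one_div, inv_pow]; field_simp
    have e2 : (2 * Lam * n + 4) * (8 / (c * κ ^ N)) * m * (32 * 4 ^ N) ^ j =
        (2 * Lam * n + 4) * (2 ^ j * (σ ^ 2 * M)) := by
      have e3 : (32 * 4 ^ N : ℝ) ^ j = 2 ^ j * σ ^ 2 * σ ^ N := by
        rw [mul_pow, ← pow_mul, hσd, ← pow_mul, ← pow_mul]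
        rw [mul_comm N j]
        congr 1
        rw [mul_comm j 2, pow_mul, ← mul_pow]; norm_num
      rw [e3, e1]; ring
    rw [e2, add_mul]
    linarith
  have hsub : {x | x ∈ Metric.ball (0 : Eu n) 1 ∧
      (2 * Lam * n + 4) * (8 / (c * κ ^ N)) * m * (32 * 4 ^ N) ^ j <
        -(pucciMinus n lam Lam (hess n u x) - b x * gradNorm n u x)} ⊆
      (Metric.ball (0 : Eu n) 1 \ (Ct n v (1 - δ) (σ ^ 2) ∩ Metric.ball (0 : Eu n) (1 - 5 * δ))) ∪
      {y : Eu n | y ∈ Metric.ball (0 : Eu n) 1 ∧ 2 ^ j < b y} := by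
    rintro x ⟨hx, hlt⟩
    by_cases h : x ∈ Ct n v (1 - δ) (σ ^ 2) ∩ Metric.ball (0 : Eu n) (1 - 5 * δ)
    · right
      refine ⟨hx, ?_⟩
      by_contra hb
      push Not at hb
      have := hgood x h.1 h.2 hb
      linarith
    · left; exact ⟨hx, h⟩
  refine (measure_mono hsub).trans ((measure_union_le _ _).trans ?_)
  have hfin : volume (Metric.ball (0 : Eu n) 1 \
      (Ct n v (1 - δ) (σ ^ 2) ∩ Metric.ball (0 : Eu n) (1 - 5 * δ))) ≠ ⊤ :=
    ((measure_mono Set.diff_subset).trans_lt measure_ball_lt_top).ne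
  rw [add_mul, ENNReal.ofReal_add (by positivity) (by positivity)]
  refine add_le_add ?_ (hvol2.trans (ENNReal.ofReal_le_ofReal ?_))
  · rw [← ENNReal.ofReal_toReal hfin]
    exact ENNReal.ofReal_le_ofReal hvol1
  · have h1 : ((2:ℝ) ^ j) ≤ (2 ^ j) ^ n := by
      calc ((2:ℝ) ^ j) = (2 ^ j) ^ 1 := (pow_one _).symm
        _ ≤ _ := pow_le_pow_right₀ (one_le_pow₀ (by norm_num)) hn
    rw [div_eq_mul_inv]
    refine mul_le_mul_of_nonneg_left ?_ (by positivity)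
    calc ((2 ^ j : ℝ) ^ n)⁻¹ ≤ (2 ^ j)⁻¹ := inv_anti₀ (by positivity) h1
      _ = (1 / 2) ^ j := by rw [← inv_pow]; norm_num
      _ ≤ θ ^ j := pow_le_pow_left₀ (by norm_num) hθh j


theorem int_distr {n : ℕ} {f : Eu n → ℝ} {C D L θ ε m : ℝ} (hC : 0 < C) (hD : 0 < D) (hL : 2 ≤ L)
    (hθ0 : 0 < θ) (hθ1 : θ < 1) (hε : 0 < ε) (hm : 0 < m) (hLθ : θ * L ^ ε < 1)
    (hf0 : ∀ x ∈ Metric.ball (0 : Eu n) 1, 0 ≤ f x)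
    (hf : ∀ j : ℕ, 3 ≤ j → volume {x | x ∈ Metric.ball (0 : Eu n) 1 ∧ D * m * L ^ j < f x} ≤
      ENNReal.ofReal (C * θ ^ j)) :
    ∫⁻ x in Metric.ball (0 : Eu n) 1, ENNReal.ofReal (f x ^ ε) ≤
      ENNReal.ofReal (m ^ ε * ((D * L ^ 3) ^ ε * volume.real (Metric.ball (0 : Eu n) 1) +
        C * (D * L ^ 4) ^ ε * (1 - θ * L ^ ε)⁻¹)) := by
  have hL0 : 0 < L := by linarith
  have hLε : 0 < L ^ ε := Real.rpow_pos_of_pos hL0 _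
  set S : ℕ → Set (Eu n) := fun j =>
    toMeasurable volume {x | x ∈ Metric.ball (0 : Eu n) 1 ∧ D * m * L ^ (j + 3) < f x} with hS
  have hSm : ∀ j, MeasurableSet (S j) := fun j => measurableSet_toMeasurable _ _
  have hSv : ∀ j, volume (S j) ≤ ENNReal.ofReal (C * θ ^ j) := fun j => by
    simp only [hS]
    rw [measure_toMeasurable]
    refine (hf (j + 3) (by omega)).trans (ENNReal.ofReal_le_ofReal ?_)
    exact mul_le_mul_of_nonneg_left (pow_le_pow_of_le_one hθ0.le hθ1.le (by omega)) hC.le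
  have hpt : ∀ x ∈ Metric.ball (0 : Eu n) 1, ENNReal.ofReal (f x ^ ε) ≤
      ENNReal.ofReal ((D * m * L ^ 3) ^ ε) +
        ∑' j : ℕ, (S j).indicator (fun _ => ENNReal.ofReal ((D * m * L ^ (j + 4)) ^ ε)) x := by
    intro x hx
    have hfx := hf0 x hx
    by_cases h3 : f x ≤ D * m * L ^ 3
    · exact (ENNReal.ofReal_le_ofReal (Real.rpow_le_rpow hfx h3 hε.le)).trans le_self_add
    push Not at h3
    have hex : ∃ k : ℕ, f x ≤ D * m * L ^ (k + 3) := by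
      obtain ⟨k, hk⟩ := pow_unbounded_of_one_lt (f x / (D * m)) (show 1 < L by linarith)
      refine ⟨k, ?_⟩
      rw [div_lt_iff₀ (by positivity), mul_comm] at hk
      refine hk.le.trans (mul_le_mul_of_nonneg_left ?_ (by positivity))
      exact pow_le_pow_right₀ (by linarith) (by omega)
    classical
    obtain ⟨k, hk, hkm⟩ : ∃ k : ℕ, D * m * L ^ (k + 3) < f x ∧ f x ≤ D * m * L ^ (k + 4) := by
      have h1 := Nat.find_spec hex
      have h2 : Nat.find hex ≠ 0 := by
        intro h0
        rw [h0] at h1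
        simp only [zero_add] at h1
        linarith
      obtain ⟨k, hk⟩ := Nat.exists_eq_succ_of_ne_zero h2
      refine ⟨k, ?_, ?_⟩
      · have := Nat.find_min hex (m := k) (by omega)
        push Not at this
        exact this
      · rw [hk] at h1
        have e : k.succ + 3 = k + 4 := by omega
        rwa [e] at h1
    have hxS : x ∈ S k := subset_toMeasurable _ _ ⟨hx, hk⟩
    refine le_trans ?_ le_add_self
    refine le_trans ?_ (ENNReal.le_tsum k)
    rw [Set.indicator_of_mem hxS]
    exact ENNReal.ofReal_le_ofReal (Real.rpow_le_rpow hfx hkm hε.le)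
  have hfinB : volume (Metric.ball (0 : Eu n) 1) ≠ ⊤ := measure_ball_lt_top.ne
  have hx0 : 0 ≤ θ * L ^ ε := by positivity
  have hpow : ∀ j : ℕ, (D * m * L ^ (j + 4)) ^ ε = m ^ ε * (D * L ^ 4) ^ ε * (L ^ ε) ^ j := by
    intro j
    have e : D * m * L ^ (j + 4) = m * (D * L ^ 4) * L ^ j := by ring
    rw [e, Real.mul_rpow (by positivity) (by positivity), Real.mul_rpow hm.le (by positivity)]
    congr 1
    rw [← Real.rpow_natCast, ← Real.rpow_natCast, ← Real.rpow_mul hL0.le, ← Real.rpow_mul hL0.le,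
      mul_comm]
  calc ∫⁻ x in Metric.ball (0 : Eu n) 1, ENNReal.ofReal (f x ^ ε)
      ≤ ∫⁻ x in Metric.ball (0 : Eu n) 1, (ENNReal.ofReal ((D * m * L ^ 3) ^ ε) +
        ∑' j : ℕ, (S j).indicator (fun _ => ENNReal.ofReal ((D * m * L ^ (j + 4)) ^ ε)) x) :=
        setLIntegral_mono' Metric.isOpen_ball.measurableSet hpt
    _ = ENNReal.ofReal ((D * m * L ^ 3) ^ ε) * volume (Metric.ball (0 : Eu n) 1) +
        ∑' j : ℕ, ∫⁻ x in Metric.ball (0 : Eu n) 1,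
          (S j).indicator (fun _ => ENNReal.ofReal ((D * m * L ^ (j + 4)) ^ ε)) x := by
        rw [lintegral_add_left measurable_const, setLIntegral_const,
          lintegral_tsum fun j => (measurable_const.indicator (hSm j)).aemeasurable]
    _ ≤ ENNReal.ofReal ((D * m * L ^ 3) ^ ε) * volume (Metric.ball (0 : Eu n) 1) +
        ∑' j : ℕ, ENNReal.ofReal (m ^ ε * (C * (D * L ^ 4) ^ ε) * (θ * L ^ ε) ^ j) := by
        gcongr with j
        refine (setLIntegral_le_lintegral _ _).trans ?_
        rw [lintegral_indicator (hSm j), setLIntegral_const]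
        calc ENNReal.ofReal ((D * m * L ^ (j + 4)) ^ ε) * volume (S j)
            ≤ ENNReal.ofReal ((D * m * L ^ (j + 4)) ^ ε) * ENNReal.ofReal (C * θ ^ j) := by
              gcongr; exact hSv j
          _ = _ := by
              rw [← ENNReal.ofReal_mul (by positivity), hpow, mul_pow]
              congr 1; ring
    _ = _ := by
        rw [← ENNReal.ofReal_tsum_of_nonneg (fun j => by positivity)
          ((summable_geometric_of_lt_one hx0 hLθ).mul_left _), tsum_mul_left,
          tsum_geometric_of_lt_one hx0 hLθ, ← ENNReal.ofReal_toReal hfinB,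
          ← ENNReal.ofReal_mul (by positivity), ← ENNReal.ofReal_add]
        · congr 1
          have e : D * m * L ^ 3 = m * (D * L ^ 3) := by ring
          rw [e, Real.mul_rpow hm.le (by positivity), measureReal_def]
          ring
        · positivity
        · have : 0 < 1 - θ * L ^ ε := by linarith
          positivity

theorem global_quantitative_strong_maximum_principle
    (n : ℕ) (hn : 2 ≤ n) (lam Lam : ℝ) (hlam : 0 < lam) (hLam : lam ≤ Lam)
    (q K : ℝ) (hq : (n : ℝ) < q) (hK : 0 < K) :
    ∃ ε c : ℝ, 0 < ε ∧ 0 < c ∧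
      ∀ b u : EuclideanSpace ℝ (Fin n) → ℝ,
        ContinuousOn b (Metric.ball 0 1) →
        (∀ x ∈ Metric.ball (0 : EuclideanSpace ℝ (Fin n)) 1, 0 ≤ b x) →
        LpNormE n q b (Metric.ball 0 1) ≤ ENNReal.ofReal K →
        ContDiffOn ℝ 2 u (Metric.ball 0 1) →
        (∀ x ∈ Metric.ball (0 : EuclideanSpace ℝ (Fin n)) 1, 0 ≤ u x) →
        (∀ x ∈ Metric.ball (0 : EuclideanSpace ℝ (Fin n)) 1,
          pucciMinus n lam Lam (hess n u x) - b x * gradNorm n u x ≤ 0) →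
        ENNReal.ofReal c *
            (∫⁻ x in Metric.ball (0 : EuclideanSpace ℝ (Fin n)) 1,
              ENNReal.ofReal
                ((-(pucciMinus n lam Lam (hess n u x) - b x * gradNorm n u x)) ^ ε)) ^ (1 / ε)
          ≤ ENNReal.ofReal
              (⨅ x : Metric.ball (0 : EuclideanSpace ℝ (Fin n)) 1, u x.1 / (1 - ‖x.1‖)) := by
  obtain ⟨C, D, L, θ, hC, hD, hL, hθ0, hθ1, hdist⟩ :=
    distr (show 1 ≤ n by omega) hlam hLam hq hK
  have hL0 : 0 < L := by linarith
  have hlogL : 0 < Real.log L := Real.log_pos (by linarith)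
  have hlogθ : Real.log θ < 0 := Real.log_neg hθ0 hθ1
  set ε := -Real.log θ / (2 * Real.log L) with hεd
  have hε : 0 < ε := div_pos (by linarith) (by positivity)
  have hLθ : θ * L ^ ε < 1 := by
    have e1 : L ^ ε = Real.exp (-Real.log θ / 2) := by
      rw [Real.rpow_def_of_pos hL0, hεd]
      congr 1; field_simp
    have e2 : θ * L ^ ε = Real.exp (Real.log θ / 2) := by
      rw [e1]
      conv_lhs => rw [← Real.exp_log hθ0]
      rw [Real.log_exp, ← Real.exp_add]
      congr 1; ring
    rw [e2, Real.exp_lt_one_iff]; linarith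
  set C3 := (D * L ^ 3) ^ ε * volume.real (Metric.ball (0 : Eu n) 1) +
        C * (D * L ^ 4) ^ ε * (1 - θ * L ^ ε)⁻¹ with hC3d
  have hC3 : 0 < C3 := by
    have h1 : 0 < 1 - θ * L ^ ε := by linarith
    have h2 : 0 ≤ volume.real (Metric.ball (0 : Eu n) 1) := measureReal_nonneg
    positivity
  have hCp : 0 < C3 ^ (1 / ε) := Real.rpow_pos_of_pos hC3 _
  refine ⟨ε, (C3 ^ (1 / ε))⁻¹, hε, by positivity, ?_⟩
  intro b u hb hb0 hbL huC hu0 hsup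
  have hs : Sup n lam Lam q K b u :=
    { bc := hb, b0 := hb0, bL := hbL
      uC := fun x hx => huC.contDiffAt (Metric.isOpen_ball.mem_nhds hx)
      u0 := hu0
      sup := fun x hx => by have := hsup x hx; linarith }
  have : Nonempty (Metric.ball (0 : EuclideanSpace ℝ (Fin n)) 1) :=
    ⟨⟨0, Metric.mem_ball_self one_pos⟩⟩
  set I := ⨅ x : Metric.ball (0 : EuclideanSpace ℝ (Fin n)) 1, u x.1 / (1 - ‖x.1‖) with hI
  have hxd : ∀ x : Metric.ball (0 : EuclideanSpace ℝ (Fin n)) 1, 0 < 1 - ‖x.1‖ := fun x => by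
    have : ‖x.1‖ < 1 := mem_ball_zero_iff.1 x.2
    linarith
  have hI0 : 0 ≤ I := Real.iInf_nonneg fun x => div_nonneg (hu0 x.1 x.2) (hxd x).le
  refine le_of_forall_gt_imp_ge_of_dense fun a ha => ?_
  by_cases hat : a = ⊤
  · rw [hat]; exact le_top
  have haI : I < a.toReal := (ENNReal.ofReal_lt_iff_lt_toReal hI0 hat).1 ha
  set m := a.toReal with hm
  have hm0 : 0 < m := by linarith
  obtain ⟨z, hz⟩ := exists_lt_of_ciInf_lt haI
  rw [div_lt_iff₀ (hxd z)] at hz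
  have hint := int_distr (f := fun x => -(pucciMinus n lam Lam (hess n u x) - b x * gradNorm n u x))
    hC hD hL hθ0 hθ1 hε hm0 hLθ (fun x hx => by have := hsup x hx; linarith)
    (hdist b u hs m z.1 hm0 z.2 hz)
  rw [← hC3d] at hint
  have hpw := ENNReal.rpow_le_rpow hint (show 0 ≤ 1 / ε by positivity)
  have hmε : 0 < m ^ ε := Real.rpow_pos_of_pos hm0 _
  rw [ENNReal.ofReal_rpow_of_pos (by positivity), Real.mul_rpow hmε.le hC3.le, ← Real.rpow_mul hm0.le,
    mul_one_div_cancel hε.ne', Real.rpow_one] at hpw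
  refine (mul_le_mul_right hpw _).trans ?_
  rw [← ENNReal.ofReal_mul (by positivity), mul_left_comm, inv_mul_cancel₀ hCp.ne', mul_one, hm,
    ENNReal.ofReal_toReal hat]
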